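/- arXiv:math/0403007 — 3 statements merged into one kernel-verified Lean document; each statement's English description precedes it below -/
import Mathlib

section
/- Let k and n be positive integers with k > 2n, and let a : ℝ³ → ℂ be a smooth compactly supported function. Then, as λ → +∞, ∫₀^∞ ∫_{ℝ²} e^{iλ t rᵏ v} a(t,r,v) r^{2n−1} dt dv dr = λ^{−2n/k} d(a) + O(λ^{−(2n+1)/k} (log λ)²), where the leading coefficient is d(a) = (Γ(2n/k)/k) ∫_{ℝ²} |t v|^{−2n/k} exp(i π (n/k) sign(t v)) a(t,0,v) dt dv (this double integral converges absolutely since 2n/k < 1 and a has compact support). -/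
open MeasureTheory

lemma auxDom (R : ℝ) : Integrable (Set.indicator (Set.Icc (-R) R) (fun _ => (1:ℝ))) := by
  rw [integrable_indicator_iff measurableSet_Icc]
  exact integrableOn_const (by simp)

lemma auxV (b : ℝ → ℂ) (hb : Continuous b) (M R : ℝ) (hM : ∀ v, ‖b v‖ ≤ M)
    (h0 : ∀ v, R < |v| → b v = 0) (x : ℝ) :
    Integrable (fun v : ℝ => Complex.exp (Complex.I * ((x * v : ℝ) : ℂ)) * b v) ∧
    (0 ≤ R → ‖∫ v : ℝ, Complex.exp (Complex.I * ((x * v : ℝ) : ℂ)) * b v‖ ≤ 2 * R * M) := by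
  have hbd : ∀ v : ℝ, ‖Complex.exp (Complex.I * ((x * v : ℝ) : ℂ)) * b v‖
      ≤ M * Set.indicator (Set.Icc (-R) R) (fun _ => (1:ℝ)) v := by
    intro v
    rw [norm_mul, mul_comm Complex.I, Complex.norm_exp_ofReal_mul_I, one_mul]
    by_cases hv : v ∈ Set.Icc (-R) R
    · simp [hv, hM v]
    · rw [h0 v]
      · simp [hv]
      · by_contra hh
        exact hv (abs_le.1 (not_lt.1 hh))
  have hi := (auxDom R).const_mul M
  refine ⟨hi.mono' (by fun_prop) (Filter.Eventually.of_forall hbd), fun hR => ?_⟩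
  refine (norm_integral_le_of_norm_le hi (Filter.Eventually.of_forall hbd)).trans ?_
  rw [integral_const_mul, integral_indicator measurableSet_Icc]
  simp [Measure.real, hR]
  linarith

lemma auxIBP (b b' : ℝ → ℂ) (hb : Continuous b) (hb' : Continuous b')
    (hd : ∀ v, HasDerivAt b (b' v) v) (M R : ℝ) (hR : 0 ≤ R) (hM : ∀ v, ‖b v‖ ≤ M)
    (hM' : ∀ v, ‖b' v‖ ≤ M)
    (h0 : ∀ v, R < |v| → b v = 0) (h0' : ∀ v, R < |v| → b' v = 0) (x : ℝ) :
    (1 + |x|) * ‖∫ v : ℝ, Complex.exp (Complex.I * ((x * v : ℝ) : ℂ)) * b v‖ ≤ 4 * R * M := by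
  have h1 := auxV b hb M R hM h0 x
  have h2 := auxV b' hb' M R hM' h0' x
  have hE : ∀ v : ℝ, HasDerivAt (fun v : ℝ => Complex.exp (Complex.I * ((x * v : ℝ) : ℂ)))
      (Complex.I * x * Complex.exp (Complex.I * ((x * v : ℝ) : ℂ))) v := by
    intro v
    have h : HasDerivAt (fun v : ℝ => Complex.I * ((x * v : ℝ) : ℂ)) (Complex.I * x) v := by
      have := ((hasDerivAt_id v).const_mul x).ofReal_comp.const_mul Complex.I
      simpa using this
    have := h.cexp
    rwa [mul_comm] at this
  have key := integral_mul_deriv_eq_deriv_mul_of_integrable (u := fun v : ℝ => Complex.exp (Complex.I * ((x * v : ℝ) : ℂ))) (v := b)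
    (u' := fun v : ℝ => Complex.I * x * Complex.exp (Complex.I * ((x * v : ℝ) : ℂ))) (v' := b')
    (fun v _ => hE v) (fun v _ => hd v) h2.1
    (by
      have := h1.1.const_mul (Complex.I * x)
      refine this.congr (Filter.Eventually.of_forall fun v => ?_)
      simp [mul_assoc]) h1.1
  have key2 : ‖∫ v : ℝ, Complex.exp (Complex.I * ((x * v : ℝ) : ℂ)) * b' v‖
      = |x| * ‖∫ v : ℝ, Complex.exp (Complex.I * ((x * v : ℝ) : ℂ)) * b v‖ := by
    rw [key, norm_neg]
    simp_rw [mul_assoc (Complex.I * (x:ℂ))]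
    rw [integral_const_mul]
    simp
  have := h1.2 hR
  have := h2.2 hR
  rw [key2] at this
  linarith

lemma auxLog (R μ : ℝ) (hR : 0 ≤ R) (hμ : 0 < μ) :
    ∫ t in (0:ℝ)..R, (1 + μ * t)⁻¹ = Real.log (1 + μ * R) / μ := by
  have h := intervalIntegral.integral_comp_add_mul (a := 0) (b := R) (fun x : ℝ => x⁻¹) hμ.ne' 1
  rw [h, integral_inv_of_pos (by simp) (by positivity)]
  simp; field_simp

noncomputable def LL (μ : ℝ) : ℝ := (1 + Real.log (1 + μ)) / (1 + μ)

lemma auxT (R μ : ℝ) (hR : 0 ≤ R) (hμ : 0 ≤ μ) :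
    Integrable (Set.indicator (Set.Icc (-R) R) (fun t => (1 + μ * |t|)⁻¹)) ∧
    (0 < μ → ∫ t, Set.indicator (Set.Icc (-R) R) (fun t => (1 + μ * |t|)⁻¹) t 
      = 2 * (Real.log (1 + μ * R) / μ)) := by
  have hc : Continuous (fun t : ℝ => (1 + μ * |t|)⁻¹) := by
    apply Continuous.inv₀ (by fun_prop)
    intro t; positivity
  constructor
  · rw [integrable_indicator_iff measurableSet_Icc]
    exact hc.continuousOn.integrableOn_Icc
  · intro hμ'
    rw [integral_indicator measurableSet_Icc, integral_Icc_eq_integral_Ioc, 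
      ← intervalIntegral.integral_of_le (by linarith)]
    rw [← intervalIntegral.integral_add_adjacent_intervals (b := 0) (hc.intervalIntegrable _ _) (hc.intervalIntegrable _ _)]
    have e1 : ∫ t in (0:ℝ)..R, (1 + μ * |t|)⁻¹ = Real.log (1 + μ * R) / μ := by
      rw [← auxLog R μ hR hμ']
      apply intervalIntegral.integral_congr
      intro t ht
      rw [Set.uIcc_of_le hR] at ht
      simp [abs_of_nonneg ht.1]
    have e2 : ∫ t in (-R)..0, (1 + μ * |t|)⁻¹ = Real.log (1 + μ * R) / μ := by
      rw [← e1]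
      have := intervalIntegral.integral_comp_neg (a := 0) (b := R) (fun t : ℝ => (1 + μ * |t|)⁻¹)
      simpa using this.symm
    rw [e1, e2]; ring

lemma lemA (R : ℝ) (hR : 1 ≤ R) : ∃ K : ℝ, 0 ≤ K ∧ ∀ (M : ℝ) (b b' : ℝ → ℝ → ℂ),
    0 ≤ M → (∀ t, Continuous (b t)) → (∀ t, Continuous (b' t)) →
    (∀ t v, HasDerivAt (b t) (b' t v) v) → (∀ t v, ‖b t v‖ ≤ M) → (∀ t v, ‖b' t v‖ ≤ M) →
    (∀ t v, R < |v| → b t v = 0) → (∀ t v, R < |v| → b' t v = 0) →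
    (∀ t v, R < |t| → b t v = 0) → ∀ μ : ℝ, 0 < μ →
    ‖∫ t : ℝ, ∫ v : ℝ, Complex.exp (Complex.I * ((μ * t * v : ℝ) : ℂ)) * b t v‖ ≤ K * M * LL μ := by
  refine ⟨8 * R * R + 8 * R * (1 + Real.log R), by have := Real.log_nonneg hR; positivity, ?_⟩
  intro M b b' hM0 hb hb' hd hM hM' h0 h0' h00 μ hμ
  have hR0 : 0 ≤ R := by linarith
  have hbd : ∀ t : ℝ, ‖∫ v : ℝ, Complex.exp (Complex.I * ((μ * t * v : ℝ) : ℂ)) * b t v‖ ≤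
      (4 * R * M) * Set.indicator (Set.Icc (-R) R) (fun t => (1 + μ * |t|)⁻¹) t := by
    intro t
    by_cases ht : t ∈ Set.Icc (-R) R
    · rw [Set.indicator_of_mem ht, ← div_eq_mul_inv, le_div_iff₀ (by positivity)]
      have := auxIBP (b t) (b' t) (hb t) (hb' t) (hd t) M R hR0 (hM t) (hM' t) (h0 t) (h0' t) (μ * t)
      rw [abs_mul, abs_of_pos hμ] at this
      linarith
    · have : R < |t| := by
        by_contra hh
        exact ht (abs_le.1 (not_lt.1 hh))
      simp [ht, h00 t _ this]
  have hT := auxT R μ hR0 hμ.le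
  have hbd2 : ∀ t : ℝ, ‖∫ v : ℝ, Complex.exp (Complex.I * ((μ * t * v : ℝ) : ℂ)) * b t v‖ ≤
      (4 * R * M) * Set.indicator (Set.Icc (-R) R) (fun t => (1 : ℝ)) t := by
    intro t
    refine (hbd t).trans ?_
    gcongr
    apply inv_le_one_of_one_le₀
    have : 0 ≤ μ * |t| := by positivity
    linarith
  have i1 := norm_integral_le_of_norm_le (hT.1.const_mul (4 * R * M)) (Filter.Eventually.of_forall hbd)
  have i2 := norm_integral_le_of_norm_le ((auxDom R).const_mul (4 * R * M)) (Filter.Eventually.of_forall hbd2)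
  rw [integral_const_mul, hT.2 hμ] at i1
  have e3 : ∫ t, Set.indicator (Set.Icc (-R) R) (fun t => (1 : ℝ)) t = 2 * R := by
    rw [integral_indicator measurableSet_Icc]
    simp [Measure.real, hR0]
    linarith
  rw [integral_const_mul, e3] at i2
  set X := ‖∫ t : ℝ, ∫ v : ℝ, Complex.exp (Complex.I * ((μ * t * v : ℝ) : ℂ)) * b t v‖
  have hl : Real.log (1 + μ * R) ≤ Real.log R + Real.log (1 + μ) := by
    rw [← Real.log_mul (by positivity) (by positivity)]
    apply Real.log_le_log (by positivity)
    nlinarith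
  have i3 : μ * X ≤ 8 * R * M * (Real.log R + Real.log (1 + μ)) := by
    have : μ * X ≤ 8 * R * M * Real.log (1 + μ * R) := by
      calc μ * X ≤ μ * (4 * R * M * (2 * (Real.log (1 + μ * R) / μ))) := by gcongr
        _ = _ := by field_simp; ring
    refine this.trans ?_
    gcongr
  have hlR := Real.log_nonneg hR
  have hlm : 0 ≤ Real.log (1 + μ) := Real.log_nonneg (by linarith)
  rw [LL, mul_div_assoc', le_div_iff₀ (by positivity)]
  have p1 : 0 ≤ R * M * Real.log (1 + μ) := by positivity
  have p2 : 0 ≤ R * M * Real.log (1 + μ) * Real.log R := by positivity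
  have p3 : 0 ≤ R * R * M * Real.log (1 + μ) := by positivity
  have p4 : 0 ≤ R * M := by positivity
  nlinarith

lemma auxInt (q c : ℝ) (hq : -1 < q) (hc : 0 < c) :
    IntegrableOn (fun x : ℝ => x ^ q * Real.exp (-(c * x))) (Set.Ioi 0) := by
  have := integrableOn_rpow_mul_exp_neg_mul_rpow hq (one_pos) hc
  simpa using this

lemma auxMeas (q : ℝ) (z : ℂ) : AEStronglyMeasurable
    (fun x : ℝ => ((x ^ q : ℝ) : ℂ) * Complex.exp (-(z * x))) (volume.restrict (Set.Ioi 0)) := by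
  apply Measurable.aestronglyMeasurable
  fun_prop

lemma auxNorm (q : ℝ) (z : ℂ) (x : ℝ) (hx : 0 < x) :
    ‖((x ^ q : ℝ) : ℂ) * Complex.exp (-(z * x))‖ = x ^ q * Real.exp (-(z.re * x)) := by
  rw [norm_mul, Complex.norm_exp, Complex.norm_real, Real.norm_of_nonneg (by positivity)]
  simp

lemma auxDiff (s : ℝ) (hs : 0 < s) (z : ℂ) (hz : 0 < z.re) :
    DifferentiableAt ℂ (fun z : ℂ => ∫ x in Set.Ioi (0:ℝ),
      ((x ^ (s-1) : ℝ) : ℂ) * Complex.exp (-(z * x))) z := by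
  have h := hasDerivAt_integral_of_dominated_loc_of_deriv_le (μ := volume.restrict (Set.Ioi (0:ℝ)))
    (F := fun (z : ℂ) (x : ℝ) => ((x ^ (s-1) : ℝ) : ℂ) * Complex.exp (-(z * x)))
    (F' := fun (z : ℂ) (x : ℝ) => -(((x ^ s : ℝ) : ℂ) * Complex.exp (-(z * x))))
    (x₀ := z) (s := {w : ℂ | z.re / 2 < w.re})
    (bound := fun x => x ^ s * Real.exp (-(z.re / 2 * x)))
    ((isOpen_lt continuous_const Complex.continuous_re).mem_nhds (by simp; linarith))
    (Filter.Eventually.of_forall fun z => auxMeas _ _)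
    ((auxInt (s-1) z.re (by linarith) hz).mono' (auxMeas _ _)
      ((ae_restrict_iff' measurableSet_Ioi).2 (Filter.Eventually.of_forall fun x hx =>
        (auxNorm _ _ _ hx).le)))
    (auxMeas _ _).neg
    ((ae_restrict_iff' measurableSet_Ioi).2 (Filter.Eventually.of_forall fun x hx w hw => by
      rw [norm_neg, auxNorm _ _ _ hx]
      have hx' : 0 < x := hx
      have hw' : z.re / 2 < w.re := hw
      gcongr))
    (auxInt s (z.re / 2) (by linarith) (by linarith))
    ((ae_restrict_iff' measurableSet_Ioi).2 (Filter.Eventually.of_forall fun x hx w hw => by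
      have hx' : 0 < x := hx
      have h1 : HasDerivAt (fun w : ℂ => -(w * x)) (-(x:ℂ)) w := by
        have h0 := ((hasDerivAt_id w).mul_const (x:ℂ)).neg
        rw [one_mul] at h0
        exact h0
      have := (h1.cexp).const_mul (((x ^ (s-1) : ℝ) : ℂ))
      convert! this using 1
      have : x ^ s = x ^ (s-1) * x := by
        rw [← Real.rpow_add_one hx'.ne']; simp
      rw [this]; push_cast; ring))
  exact h.2.differentiableAt

lemma lemB (s : ℝ) (hs : 0 < s) (z : ℂ) (hz : 0 < z.re) :
    ∫ x in Set.Ioi (0:ℝ), ((x ^ (s-1) : ℝ) : ℂ) * Complex.exp (-(z * x))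
      = (1 / z) ^ (s : ℂ) * (Real.Gamma s : ℂ) := by
  have hopen : IsOpen {w : ℂ | 0 < w.re} := isOpen_lt continuous_const Complex.continuous_re
  have hA : AnalyticOnNhd ℂ (fun z : ℂ => ∫ x in Set.Ioi (0:ℝ),
      ((x ^ (s-1) : ℝ) : ℂ) * Complex.exp (-(z * x))) {w : ℂ | 0 < w.re} :=
    DifferentiableOn.analyticOnNhd (fun w hw => (auxDiff s hs w hw).differentiableWithinAt) hopen
  have hB : AnalyticOnNhd ℂ (fun z : ℂ => (1 / z) ^ (s : ℂ) * (Real.Gamma s : ℂ)) {w : ℂ | 0 < w.re} := by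
    refine DifferentiableOn.analyticOnNhd (fun w hw => ?_) hopen
    have hw' : 0 < w.re := hw
    have hw0 : w ≠ 0 := by rintro rfl; simp at hw'
    refine DifferentiableAt.differentiableWithinAt ?_
    refine DifferentiableAt.mul_const ?_ _
    refine DifferentiableAt.cpow_const (by fun_prop (disch := assumption)) ?_
    left
    rw [one_div, Complex.inv_re]
    have : 0 < Complex.normSq w := Complex.normSq_pos.2 hw0
    positivity
  have hC : Convex ℝ {w : ℂ | 0 < w.re} := convex_halfSpace_re_gt 0
  refine AnalyticOnNhd.eqOn_of_preconnected_of_frequently_eq hA hB hC.isPreconnected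
    (z₀ := 1) (by simp) ?_ hz
  have hreal : ∀ r : ℝ, 0 < r → ∫ x in Set.Ioi (0:ℝ), ((x ^ (s-1) : ℝ) : ℂ) * Complex.exp (-((r:ℂ) * x))
      = (1 / (r:ℂ)) ^ (s : ℂ) * (Real.Gamma s : ℂ) := by
    intro r hr
    have := Complex.integral_cpow_mul_exp_neg_mul_Ioi (a := (s:ℂ)) (by simpa using hs) hr
    rw [Complex.Gamma_ofReal] at this
    rw [← this]
    refine setIntegral_congr_fun measurableSet_Ioi fun x hx => ?_
    have hx' : 0 < x := hx
    rw [Complex.ofReal_cpow hx'.le]; push_cast; rfl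
  have ht : Filter.Tendsto (fun r : ℝ => (r : ℂ)) (nhdsWithin 1 {1}ᶜ) (nhdsWithin 1 {1}ᶜ) := by
    apply tendsto_nhdsWithin_of_tendsto_nhds_of_eventually_within
    · exact (Complex.continuous_ofReal.tendsto' 1 1 (by simp)).mono_left nhdsWithin_le_nhds
    · filter_upwards [self_mem_nhdsWithin] with r hr
      simpa using hr
  refine ht.frequently (Filter.Eventually.frequently ?_)
  have : ∀ᶠ r : ℝ in nhdsWithin 1 {1}ᶜ, 0 < r := 
    nhdsWithin_le_nhds (lt_mem_nhds one_pos)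
  filter_upwards [this] with r hr
  exact hreal r hr

lemma LL_bd (d μ : ℝ) (hd : 0 < d) (hd1 : d < 1) (hμ : 0 < μ) : LL μ ≤ (1 + 1 / d) * μ ^ (d - 1) := by
  have h1 := Real.log_le_rpow_div (x := 1 + μ) (by linarith) hd
  have h2 : (1:ℝ) ≤ (1 + μ) ^ d := Real.one_le_rpow (by linarith) hd.le
  have h3 : LL μ ≤ (1 + 1 / d) * (1 + μ) ^ (d - 1) := by
    rw [LL, Real.rpow_sub_one (by positivity), ← mul_div_assoc]
    gcongr
    calc _ ≤ (1 + μ) ^ d + (1 + μ) ^ d / d := by linarith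
      _ = _ := by ring
  refine h3.trans ?_
  have : (1 + μ) ^ (d - 1) ≤ μ ^ (d - 1) :=
    Real.rpow_le_rpow_of_nonpos hμ (by linarith) (by linarith)
  gcongr

lemma LL_nonneg (μ : ℝ) (hμ : 0 ≤ μ) : 0 ≤ LL μ := by
  have := Real.log_nonneg (x := 1 + μ) (by linarith)
  unfold LL; positivity

lemma LL_le_one (μ : ℝ) (hμ : 0 ≤ μ) : LL μ ≤ 1 := by
  have := Real.log_le_sub_one_of_pos (x := 1 + μ) (by linarith)
  unfold LL
  rw [div_le_one (by linarith)]
  linarith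

lemma LL_meas : Measurable LL := by unfold LL; fun_prop

lemma LL_int (s : ℝ) (hs : 0 < s) (hs1 : s < 1) :
    IntegrableOn (fun μ : ℝ => μ ^ (s - 1) * LL μ) (Set.Ioi 0) := by
  have hm : Measurable (fun μ : ℝ => μ ^ (s - 1) * LL μ) := by
    have := LL_meas
    fun_prop
  rw [← Set.Ioc_union_Ioi_eq_Ioi (zero_le_one), integrableOn_union]
  constructor
  · have h : IntegrableOn (fun μ : ℝ => μ ^ (s - 1)) (Set.Ioc 0 1) := by
      rw [← intervalIntegrable_iff_integrableOn_Ioc_of_le zero_le_one]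
      exact intervalIntegral.intervalIntegrable_rpow' (by linarith)
    refine Integrable.mono' h hm.aestronglyMeasurable
      ((ae_restrict_iff' measurableSet_Ioc).2 (Filter.Eventually.of_forall fun x hx => ?_))
    have hx0 : 0 < x := hx.1
    have := LL_nonneg x hx0.le
    rw [Real.norm_of_nonneg (by positivity)]
    exact mul_le_of_le_one_right (by positivity) (LL_le_one x hx0.le)
  · have h : IntegrableOn (fun μ : ℝ => (1 + 1 / ((1-s)/2)) * μ ^ ((s - 3)/2)) (Set.Ioi 1) := 
      (integrableOn_Ioi_rpow_of_lt (by linarith) one_pos).const_mul _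
    refine Integrable.mono' h hm.aestronglyMeasurable
      ((ae_restrict_iff' measurableSet_Ioi).2 (Filter.Eventually.of_forall fun x hx => ?_))
    have hx0 : 0 < x := lt_trans one_pos hx
    have := LL_nonneg x hx0.le
    rw [Real.norm_of_nonneg (by positivity)]
    have h1 := LL_bd ((1-s)/2) x (by linarith) (by linarith) hx0
    calc _ ≤ x ^ (s-1) * ((1 + 1 / ((1-s)/2)) * x ^ ((1-s)/2 - 1)) := by gcongr
      _ = (1 + 1 / ((1-s)/2)) * (x ^ (s-1) * x ^ ((1-s)/2 - 1)) := by ring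
      _ = _ := by rw [← Real.rpow_add hx0]; congr 2; ring

lemma absInt (s R : ℝ) (hs1 : s < 1) (hR : 0 ≤ R) :
    Integrable (Set.indicator (Set.Icc (-R) R) (fun t : ℝ => |t| ^ (-s))) := by
  rw [integrable_indicator_iff measurableSet_Icc, integrableOn_Icc_iff_integrableOn_Ioc,
    ← intervalIntegrable_iff_integrableOn_Ioc_of_le (by linarith)]
  refine intervalIntegrable_of_even ?_ ?_ enorm_ne_top enorm_ne_top
  · simp
  · intro x hx
    have := intervalIntegral.intervalIntegrable_rpow' (a := 0) (b := x) (r := -s) (by linarith)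
    refine this.congr fun t ht => ?_
    rw [Set.uIoc_of_le hx.le] at ht
    simp [abs_of_pos ht.1]

lemma limB (s y : ℝ) (hy : y ≠ 0) :
    (1 / (((0:ℝ):ℂ) - Complex.I * (y:ℂ))) ^ (s:ℂ) = 
      ((|y| ^ (-s) : ℝ) : ℂ) * Complex.exp (Complex.I * ((Real.pi * (s / 2) * Real.sign y : ℝ) : ℂ)) := by
  have hy0 : 0 < |y| := abs_pos.2 hy
  have hl : Complex.log (1 / (((0:ℝ):ℂ) - Complex.I * (y:ℂ))) = 
      ((-Real.log |y| : ℝ) : ℂ) + Real.pi / 2 * Complex.I * (Real.sign y : ℂ) := by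
    have : (y:ℂ) ≠ 0 := by exact_mod_cast hy
    have hI : (1 / (((0:ℝ):ℂ) - Complex.I * (y:ℂ))) = ((|y|⁻¹ : ℝ) : ℂ) * (Complex.I * Real.sign y) := by
      rcases lt_or_gt_of_ne hy with h | h
      · rw [abs_of_neg h, Real.sign_of_neg h]
        push_cast; field_simp; linear_combination (y : ℂ) * Complex.I_mul_I
      · rw [abs_of_pos h, Real.sign_of_pos h]
        push_cast; field_simp; linear_combination (y : ℂ) * Complex.I_mul_I
    have hs : (Real.sign y : ℂ) ≠ 0 := by
      rcases lt_or_gt_of_ne hy with h | h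
      · simp [Real.sign_of_neg h]
      · simp [Real.sign_of_pos h]
    rw [hI, Complex.log_ofReal_mul (by positivity) (by simp [hs]), Real.log_inv]
    congr 1
    rcases lt_or_gt_of_ne hy with h | h
    · rw [Real.sign_of_neg h]
      have := Complex.log_neg_I
      push_cast
      rw [mul_neg_one, this]; ring
    · simp [Real.sign_of_pos h, Complex.log_I]
  have hne : (1 / (((0:ℝ):ℂ) - Complex.I * (y:ℂ))) ≠ 0 := by
    simp [hy]
  rw [Complex.cpow_def_of_ne_zero hne, hl, Real.rpow_def_of_pos hy0, Complex.ofReal_exp, ← Complex.exp_add]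
  congr 1
  push_cast; ring

lemma normB (s y e : ℝ) (hs : 0 < s) (hy : y ≠ 0) :
    ‖(1 / ((e:ℂ) - Complex.I * (y:ℂ))) ^ (s:ℂ)‖ ≤ |y| ^ (-s) := by
  have hn : |y| ≤ ‖(e:ℂ) - Complex.I * (y:ℂ)‖ := by
    have := Complex.abs_im_le_norm ((e:ℂ) - Complex.I * (y:ℂ))
    simpa using this
  have hy0 : 0 < |y| := abs_pos.2 hy
  rw [Complex.norm_cpow_real, norm_div, norm_one, Real.rpow_neg hy0.le, ← Real.inv_rpow hy0.le, one_div]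
  gcongr

lemma tendB (s y : ℝ) (hy : y ≠ 0) : Filter.Tendsto (fun e : ℝ => 
    (1 / ((e:ℂ) - Complex.I * (y:ℂ))) ^ (s:ℂ)) (nhdsWithin 0 (Set.Ioi 0))
    (nhds (((|y| ^ (-s) : ℝ) : ℂ) * Complex.exp (Complex.I * ((Real.pi * (s / 2) * Real.sign y : ℝ) : ℂ)))) := by
  rw [← limB s y hy]
  refine Filter.Tendsto.mono_left ?_ nhdsWithin_le_nhds
  have hne : (((0:ℝ):ℂ) - Complex.I * (y:ℂ)) ≠ 0 := by simp [hy]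
  have h1 : ContinuousAt (fun e : ℝ => (1 / ((e:ℂ) - Complex.I * (y:ℂ)))) 0 := by
    fun_prop (disch := assumption)
  have h2 := Filter.Tendsto.cpow h1 (tendsto_const_nhds (x := (s:ℂ))) (by
    right
    simp [hy])
  exact h2

lemma lemC (s : ℝ) (hs : 0 < s) (hs1 : s < 1) (b : ℝ × ℝ → ℂ) (hb : Continuous b)
    (R M K : ℝ) (hR : 0 ≤ R) (hM0 : 0 ≤ M) (hM : ∀ p, ‖b p‖ ≤ M)
    (h0 : ∀ t v, R < |t| → b (t, v) = 0) (h0' : ∀ t v, R < |v| → b (t, v) = 0)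
    (hK : ∀ μ : ℝ, 0 < μ → ‖∫ t : ℝ, ∫ v : ℝ,
      Complex.exp (Complex.I * ((μ * t * v : ℝ) : ℂ)) * b (t, v)‖ ≤ K * LL μ) :
    ∫ μ in Set.Ioi (0:ℝ), ((μ ^ (s-1) : ℝ) : ℂ) * ∫ t : ℝ, ∫ v : ℝ,
      Complex.exp (Complex.I * ((μ * t * v : ℝ) : ℂ)) * b (t, v)
    = (Real.Gamma s : ℂ) * ∫ t : ℝ, ∫ v : ℝ, ((|t * v| ^ (-s) : ℝ) : ℂ) *
        Complex.exp (Complex.I * ((Real.pi * (s / 2) * Real.sign (t * v) : ℝ) : ℂ)) * b (t, v) := by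
  -- dominating function
  have hsupp : ∀ p : ℝ × ℝ, b p ≠ 0 → p.1 ∈ Set.Icc (-R) R ∧ p.2 ∈ Set.Icc (-R) R := by
    intro p hp
    constructor
    · by_contra h
      exact hp (h0 p.1 p.2 (by by_contra hh; exact h (abs_le.1 (not_lt.1 hh))))
    · by_contra h
      exact hp (h0' p.1 p.2 (by by_contra hh; exact h (abs_le.1 (not_lt.1 hh))))
  have hcs : HasCompactSupport b := by
    apply HasCompactSupport.of_support_subset_isCompact (K := Set.Icc (-R) R ×ˢ Set.Icc (-R) R)
      (isCompact_Icc.prod isCompact_Icc)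
    intro p hp
    exact hsupp p hp
  have hbint : Integrable b := hb.integrable_of_hasCompactSupport hcs
  set D : ℝ × ℝ → ℝ := fun p => M * (Set.indicator (Set.Icc (-R) R) (fun t : ℝ => |t| ^ (-s)) p.1 *
    Set.indicator (Set.Icc (-R) R) (fun t : ℝ => |t| ^ (-s)) p.2) with hD
  have hDint : Integrable D :=
    ((absInt s R hs1 hR).mul_prod (absInt s R hs1 hR)).const_mul M
  have hDb : ∀ (p : ℝ × ℝ) (c : ℂ), ‖c‖ ≤ |p.1 * p.2| ^ (-s) → ‖c * b p‖ ≤ D p := by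
    intro p c hc
    by_cases hp : b p = 0
    · rw [hp, mul_zero, norm_zero]
      have : ∀ x, 0 ≤ Set.indicator (Set.Icc (-R) R) (fun t : ℝ => |t| ^ (-s)) x :=
        fun x => Set.indicator_nonneg (fun _ _ => by positivity) x
      exact mul_nonneg hM0 (mul_nonneg (this _) (this _))
    · obtain ⟨h1, h2⟩ := hsupp p hp
      rw [hD]
      simp only [Set.indicator_of_mem h1, Set.indicator_of_mem h2]
      rw [norm_mul, ← Real.mul_rpow (abs_nonneg _) (abs_nonneg _), ← abs_mul, mul_comm]
      gcongr
      exact hM p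
  have hne : ∀ᵐ p : ℝ × ℝ, p.1 * p.2 ≠ 0 := by
    have h1 : ∀ᵐ p : ℝ × ℝ, p.1 ≠ 0 :=
      Measure.quasiMeasurePreserving_fst.ae (Measure.ae_ne volume (0:ℝ))
    have h2 : ∀ᵐ p : ℝ × ℝ, p.2 ≠ 0 :=
      Measure.quasiMeasurePreserving_snd.ae (Measure.ae_ne volume (0:ℝ))
    filter_upwards [h1, h2] with p hp1 hp2
    exact mul_ne_zero hp1 hp2
  have hnE : ∀ x : ℝ, ‖Complex.exp (Complex.I * (x:ℂ))‖ = 1 := by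
    intro x
    rw [mul_comm, Complex.norm_exp_ofReal_mul_I]
  set F : ℝ → ℂ := fun μ => ∫ p : ℝ × ℝ, Complex.exp (Complex.I * ((μ * p.1 * p.2 : ℝ) : ℂ)) * b p with hF
  have hFeq : ∀ μ : ℝ, ∫ t : ℝ, ∫ v : ℝ,
      Complex.exp (Complex.I * ((μ * t * v : ℝ) : ℂ)) * b (t, v) = F μ := by
    intro μ
    rw [hF]
    simp only
    have hi : Integrable (fun p : ℝ × ℝ => Complex.exp (Complex.I * ((μ * p.1 * p.2 : ℝ) : ℂ)) * b p) :=
      hbint.bdd_mul (c := 1) (by fun_prop) (Filter.Eventually.of_forall fun p => (hnE _).le)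
    exact (integral_prod _ hi).symm
  have hFm : StronglyMeasurable F := by
    have : Continuous (fun q : ℝ × (ℝ × ℝ) => Complex.exp (Complex.I * ((q.1 * q.2.1 * q.2.2 : ℝ) : ℂ)) * b q.2) := by
      fun_prop
    exact this.stronglyMeasurable.integral_prod_right
  simp_rw [hFeq] at hK ⊢
  have hRint : Integrable (fun p : ℝ × ℝ => ((|p.1 * p.2| ^ (-s) : ℝ) : ℂ) *
        Complex.exp (Complex.I * ((Real.pi * (s / 2) * Real.sign (p.1 * p.2) : ℝ) : ℂ)) * b p) := by
    have hsg : Measurable Real.sign := by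
      unfold Real.sign
      refine Measurable.ite measurableSet_Iio measurable_const
        (Measurable.ite measurableSet_Ioi measurable_const measurable_const)
    refine hDint.mono' ?_ (Filter.Eventually.of_forall fun p => hDb p _ ?_)
    · apply Measurable.aestronglyMeasurable
      have := hb.measurable
      fun_prop
    · rw [norm_mul, hnE, mul_one, Complex.norm_real, Real.norm_of_nonneg (by positivity)]
  have hReq : ∫ t : ℝ, ∫ v : ℝ, ((|t * v| ^ (-s) : ℝ) : ℂ) *
        Complex.exp (Complex.I * ((Real.pi * (s / 2) * Real.sign (t * v) : ℝ) : ℂ)) * b (t, v)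
      = ∫ p : ℝ × ℝ, ((|p.1 * p.2| ^ (-s) : ℝ) : ℂ) *
        Complex.exp (Complex.I * ((Real.pi * (s / 2) * Real.sign (p.1 * p.2) : ℝ) : ℂ)) * b p :=
    (integral_prod _ hRint).symm
  rw [hReq]
  -- regularised identity
  have hreg : ∀ e : ℝ, 0 < e → ∫ μ in Set.Ioi (0:ℝ), (((μ ^ (s-1) : ℝ) : ℂ) * (Real.exp (-(e * μ)) : ℂ)) * F μ
      = (Real.Gamma s : ℂ) * ∫ p : ℝ × ℝ, (1 / ((e:ℂ) - Complex.I * ((p.1 * p.2 : ℝ):ℂ))) ^ (s:ℂ) * b p := by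
    intro e he
    rw [hF]
    simp only
    simp_rw [← integral_const_mul]
    rw [integral_integral_swap]
    · refine integral_congr_ae (Filter.Eventually.of_forall fun p => ?_)
      simp only
      have := lemB s hs ((e:ℂ) - Complex.I * ((p.1 * p.2 : ℝ):ℂ)) (by simp [he])
      calc _ = ∫ μ in Set.Ioi (0:ℝ), (((μ ^ (s-1) : ℝ) : ℂ) * Complex.exp (-(((e:ℂ) - Complex.I * ((p.1 * p.2 : ℝ):ℂ)) * μ))) * b p := by
            refine integral_congr_ae (Filter.Eventually.of_forall fun μ => ?_)
            simp only
            rw [Complex.ofReal_exp, ← mul_assoc, mul_assoc (((μ ^ (s-1) : ℝ) : ℂ)), ← Complex.exp_add]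
            congr 3
            push_cast; ring
        _ = _ := by rw [integral_mul_const, this]; ring
    · have h1 : IntegrableOn (fun μ : ℝ => (((μ ^ (s-1) : ℝ) : ℂ) * (Real.exp (-(e * μ)) : ℂ))) (Set.Ioi 0) := by
        have := (auxInt (s-1) e (by linarith) he).ofReal (𝕜 := ℂ)
        refine this.congr (Filter.Eventually.of_forall fun x => ?_)
        simp
      have h2 := (Integrable.mul_prod h1 hbint)
      have h3 := h2.bdd_mul (c := 1) (f := fun q : ℝ × (ℝ × ℝ) => Complex.exp (Complex.I * ((q.1 * q.2.1 * q.2.2 : ℝ) : ℂ)))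
        (by fun_prop) (Filter.Eventually.of_forall fun p => (hnE _).le)
      refine h3.congr (Filter.Eventually.of_forall fun q => ?_)
      simp only [Function.uncurry]
      ring
  -- limits
  have hL : Filter.Tendsto (fun e : ℝ => ∫ μ in Set.Ioi (0:ℝ), (((μ ^ (s-1) : ℝ) : ℂ) * (Real.exp (-(e * μ)) : ℂ)) * F μ)
      (nhdsWithin 0 (Set.Ioi 0)) (nhds (∫ μ in Set.Ioi (0:ℝ), ((μ ^ (s-1) : ℝ) : ℂ) * F μ)) := by
    refine tendsto_integral_filter_of_dominated_convergence (fun μ => K * (μ ^ (s-1) * LL μ)) ?_ ?_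
      ((LL_int s hs hs1).const_mul K) ?_
    · refine Filter.Eventually.of_forall fun e => ?_
      apply Measurable.aestronglyMeasurable
      have := hFm.measurable
      fun_prop
    · filter_upwards [self_mem_nhdsWithin] with e he
      refine (ae_restrict_iff' measurableSet_Ioi).2 (Filter.Eventually.of_forall fun μ hμ => ?_)
      have hμ' : 0 < μ := hμ
      have he' : 0 < e := he
      rw [norm_mul, norm_mul, Complex.norm_real, Complex.norm_real, Real.norm_of_nonneg (by positivity),
        Real.norm_of_nonneg (by positivity)]
      have h1 : Real.exp (-(e * μ)) ≤ 1 := by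
        rw [Real.exp_le_one_iff]; have : 0 < e * μ := by positivity
        linarith
      calc _ ≤ μ ^ (s-1) * 1 * (K * LL μ) := by
            gcongr
            exact hK μ hμ'
        _ = _ := by ring
    · refine Filter.Eventually.of_forall fun μ => ?_
      have : Continuous (fun e : ℝ => (((μ ^ (s-1) : ℝ) : ℂ) * (Real.exp (-(e * μ)) : ℂ)) * F μ) := by fun_prop
      exact (this.tendsto' 0 _ (by simp)).mono_left nhdsWithin_le_nhds
  have hRt : Filter.Tendsto (fun e : ℝ => (Real.Gamma s : ℂ) * ∫ p : ℝ × ℝ, (1 / ((e:ℂ) - Complex.I * ((p.1 * p.2 : ℝ):ℂ))) ^ (s:ℂ) * b p)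
      (nhdsWithin 0 (Set.Ioi 0)) (nhds ((Real.Gamma s : ℂ) * ∫ p : ℝ × ℝ, ((|p.1 * p.2| ^ (-s) : ℝ) : ℂ) *
        Complex.exp (Complex.I * ((Real.pi * (s / 2) * Real.sign (p.1 * p.2) : ℝ) : ℂ)) * b p)) := by
    refine Filter.Tendsto.const_mul _ ?_
    refine tendsto_integral_filter_of_dominated_convergence D ?_ ?_ hDint ?_
    · refine Filter.Eventually.of_forall fun e => ?_
      apply Measurable.aestronglyMeasurable
      have := hb.measurable
      fun_prop
    · refine Filter.Eventually.of_forall fun e => ?_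
      filter_upwards [hne] with p hp
      exact hDb p _ (normB s _ e hs hp)
    · filter_upwards [hne] with p hp
      exact (tendB s _ hp).mul_const _
  refine tendsto_nhds_unique hL (hRt.congr' ?_)
  filter_upwards [self_mem_nhdsWithin] with e he
  exact (hreg e he).symm

lemma lemD (k n : ℕ) (hk : 0 < k) (hn : 0 < n) (F : ℝ → ℂ) (lam : ℝ) (hl : 0 < lam) :
    ∫ r in Set.Ioi (0:ℝ), F (lam * r ^ k) * (r:ℂ) ^ (2 * n - 1)
      = ((lam ^ (-((2 * n : ℝ) / (k : ℝ))) : ℝ) : ℂ) * (((1 / (k:ℝ) : ℝ) : ℂ) *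
        ∫ μ in Set.Ioi (0:ℝ), ((μ ^ ((2 * n : ℝ) / (k : ℝ) - 1) : ℝ) : ℂ) * F μ) := by
  set s : ℝ := (2 * n : ℝ) / (k : ℝ) with hs
  have hk' : (0:ℝ) < k := by exact_mod_cast hk
  have h1 := integral_comp_rpow_Ioi_of_pos (p := (k:ℝ))
    (g := fun y : ℝ => ((1 / k * y ^ (s-1) : ℝ) : ℂ) * F (lam * y)) hk'
  have h2 := integral_comp_mul_left_Ioi (fun μ : ℝ => ((μ ^ (s - 1) : ℝ) : ℂ) * F μ) 0 hl
  rw [mul_zero] at h2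
  have h3 : ∫ r in Set.Ioi (0:ℝ), F (lam * r ^ k) * (r:ℂ) ^ (2 * n - 1) =
      ∫ x in Set.Ioi (0:ℝ), ((k:ℝ) * x ^ ((k:ℝ) - 1)) •
        (((1 / k * (x ^ (k:ℝ)) ^ (s-1) : ℝ) : ℂ) * F (lam * x ^ (k:ℝ))) := by
    refine setIntegral_congr_fun measurableSet_Ioi fun x hx => ?_
    have hx' : 0 < x := hx
    rw [Real.rpow_natCast, Complex.real_smul, ← mul_assoc, ← Complex.ofReal_mul, mul_comm]
    congr 1
    rw [← Complex.ofReal_pow]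
    congr 1
    rw [← Real.rpow_natCast x k, ← Real.rpow_mul hx'.le]
    have : (k:ℝ) * x ^ ((k:ℝ) - 1) * (1 / k * x ^ ((k:ℝ) * (s-1))) = x ^ ((k:ℝ) - 1) * x ^ ((k:ℝ) * (s-1)) := by
      field_simp
    rw [this, ← Real.rpow_add hx', ← Real.rpow_natCast]
    congr 1
    rw [Nat.cast_sub (by omega), hs]
    push_cast
    field_simp
    ring
  rw [h3, h1]
  have h4 : ∫ y in Set.Ioi (0:ℝ), ((1 / k * y ^ (s-1) : ℝ) : ℂ) * F (lam * y) =
      ∫ y in Set.Ioi (0:ℝ), ((1 / k * lam ^ (-(s-1)) : ℝ) : ℂ) * 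
        ((((lam * y) ^ (s - 1) : ℝ) : ℂ) * F (lam * y)) := by
    refine setIntegral_congr_fun measurableSet_Ioi fun x hx => ?_
    have hx' : 0 < x := hx
    rw [← mul_assoc, ← Complex.ofReal_mul]
    congr 2
    rw [Real.mul_rpow hl.le hx'.le, Real.rpow_neg hl.le]
    have : lam ^ (s-1) ≠ 0 := by positivity
    field_simp
  rw [h4, integral_const_mul, h2, Complex.real_smul, ← mul_assoc, ← mul_assoc, ← Complex.ofReal_mul, ← Complex.ofReal_mul]
  congr 2
  have : lam ^ (-(s-1)) = lam ^ (-s) * lam := by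
    rw [← Real.rpow_add_one hl.ne']; congr 1; ring
  rw [this]; field_simp

lemma tailBd (k n : ℕ) (hn : 0 < n) (hkn : 2 * n < k) (lam r : ℝ) (hl : Real.exp 1 ≤ lam) (hr : 1 ≤ r) :
    LL (lam * r ^ k) * r ^ (2 * n - 1) ≤ ((3 + 2 * k) * Real.log lam / lam) * r ^ (-(3/2) : ℝ) := by
  have he : 2 ≤ lam := by
    have := Real.add_one_le_exp 1
    linarith
  have hlog : 1 ≤ Real.log lam := by
    rw [Real.le_log_iff_exp_le (by linarith)]; exact hl
  have hr0 : 0 < r := by linarith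
  have hl0 : 0 < lam := by linarith
  have hrk : 1 ≤ r ^ k := one_le_pow₀ hr
  have h1 : Real.log (1 + lam * r ^ k) ≤ 2 * Real.log lam + k * Real.log r := by
    have q1 : 2 * Real.log lam = Real.log (lam ^ 2) := by simp
    have q2 : k * Real.log r = Real.log (r ^ k) := by simp
    rw [q1, q2, ← Real.log_mul (by positivity) (by positivity)]
    apply Real.log_le_log (by positivity)
    nlinarith [mul_le_mul_of_nonneg_right he (by positivity : 0 ≤ lam * r ^ k)]
  have h2 : Real.log r ≤ 2 * r ^ (1/2 : ℝ) := by
    have := Real.log_le_rpow_div hr0.le (by norm_num : (0:ℝ) < 1/2)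
    linarith
  have h3 : (1:ℝ) ≤ r ^ (1/2 : ℝ) := Real.one_le_rpow hr (by norm_num)
  have h4 : 1 + Real.log (1 + lam * r ^ k) ≤ (3 + 2 * k) * Real.log lam * r ^ (1/2 : ℝ) := by
    have hk0 : (0:ℝ) ≤ k := by positivity
    calc 1 + Real.log (1 + lam * r ^ k) ≤ 1 + (2 * Real.log lam + k * (2 * r ^ (1/2 : ℝ))) := by
          have := mul_le_mul_of_nonneg_left h2 hk0
          linarith
      _ ≤ 3 * Real.log lam * r ^ (1/2 : ℝ) + 2 * k * Real.log lam * r ^ (1/2 : ℝ) := by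
          have a1 : Real.log lam ≤ Real.log lam * r ^ (1/2 : ℝ) := le_mul_of_one_le_right (by linarith) h3
          have a2 : (k:ℝ) * r ^ (1/2 : ℝ) ≤ k * (Real.log lam * r ^ (1/2 : ℝ)) := by
            gcongr
            exact le_mul_of_one_le_left (by positivity) hlog
          linarith
      _ = _ := by ring
  have h5 : r ^ (2 * n - 1) * r ^ (1/2 : ℝ) / r ^ k ≤ r ^ (-(3/2) : ℝ) := by
    rw [div_le_iff₀ (by positivity), ← Real.rpow_natCast, ← Real.rpow_natCast, ← Real.rpow_add hr0, ← Real.rpow_add hr0]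
    apply Real.rpow_le_rpow_of_exponent_le hr
    rw [Nat.cast_sub (by omega)]
    have : ((2 * n + 1 : ℕ) : ℝ) ≤ k := by exact_mod_cast hkn
    push_cast at this ⊢
    linarith
  calc LL (lam * r ^ k) * r ^ (2 * n - 1) 
      ≤ ((3 + 2 * k) * Real.log lam * r ^ (1/2 : ℝ)) / (lam * r ^ k) * r ^ (2 * n - 1) := by
        unfold LL
        gcongr
        linarith
    _ = ((3 + 2 * k) * Real.log lam / lam) * (r ^ (2 * n - 1) * r ^ (1/2 : ℝ) / r ^ k) := by
        field_simp
    _ ≤ _ := by gcongr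

lemma midBd (k n : ℕ) (hn : 0 < n) (hkn : 2 * n < k) (lam r : ℝ) (hl : Real.exp 1 ≤ lam) (hr0 : 0 < r) (hr : r ≤ 1) :
    r * LL (lam * r ^ k) * r ^ (2 * n - 1) ≤ (3 * Real.log lam * lam ^ (-((2 * (n : ℝ) + 1) / (k : ℝ)))) * r⁻¹ := by
  have he : 2 ≤ lam := by
    have := Real.add_one_le_exp 1
    linarith
  have hlog : 1 ≤ Real.log lam := by
    rw [Real.le_log_iff_exp_le (by linarith)]; exact hl
  have hl0 : 0 < lam := by linarith
  have hk0 : (0:ℝ) < k := by exact_mod_cast (by omega : 0 < k)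
  set σ := (2 * (n : ℝ) + 1) / (k : ℝ) with hσ
  have hσ0 : 0 ≤ σ := by positivity
  have hσ1 : σ ≤ 1 := by
    rw [hσ, div_le_one hk0]
    exact_mod_cast hkn
  have hrk : r ^ k ≤ 1 := pow_le_one₀ hr0.le hr
  have h1 : 1 + Real.log (1 + lam * r ^ k) ≤ 3 * Real.log lam := by
    have : Real.log (1 + lam * r ^ k) ≤ 2 * Real.log lam := by
      have q1 : 2 * Real.log lam = Real.log (lam ^ 2) := by simp
      rw [q1]
      apply Real.log_le_log (by positivity)
      nlinarith
    linarith
  have h2 : (lam * r ^ k) ^ σ ≤ 1 + lam * r ^ k := by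
    rcases le_total (lam * r ^ k) 1 with h | h
    · have := Real.rpow_le_one (by positivity) h hσ0
      have : 0 < lam * r ^ k := by positivity
      linarith
    · have := Real.rpow_le_rpow_of_exponent_le h hσ1
      rw [Real.rpow_one] at this
      linarith
  have h3 : (lam * r ^ k) ^ σ = lam ^ σ * r ^ (2 * n + 1) := by
    rw [Real.mul_rpow hl0.le (by positivity), ← Real.rpow_natCast r k, ← Real.rpow_mul hr0.le, ← Real.rpow_natCast]
    congr 2
    rw [hσ]; push_cast; field_simp
  rw [h3] at h2
  have h4 : r * r ^ (2 * n - 1) = r ^ (2 * n) := by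
    rw [← pow_succ']; congr 1; omega
  have h5 : r ^ (2 * n) / (1 + lam * r ^ k) ≤ lam ^ (-σ) * r⁻¹ := by
    rw [div_le_iff₀ (by positivity), Real.rpow_neg hl0.le]
    calc r ^ (2 * n) = (lam ^ σ)⁻¹ * r⁻¹ * (lam ^ σ * r ^ (2 * n + 1)) := by
          have : lam ^ σ ≠ 0 := by positivity
          field_simp; ring
      _ ≤ _ := by gcongr
  calc r * LL (lam * r ^ k) * r ^ (2 * n - 1) = (1 + Real.log (1 + lam * r ^ k)) * (r ^ (2 * n) / (1 + lam * r ^ k)) := by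
        rw [← h4]; unfold LL; ring
    _ ≤ 3 * Real.log lam * (lam ^ (-σ) * r⁻¹) := by gcongr
    _ = _ := by ring

lemma intBd (k n : ℕ) (hn : 0 < n) (hkn : 2 * n < k) (lam A : ℝ) (hl : Real.exp 1 ≤ lam) (hA : 0 ≤ A)
    (f : ℝ → ℂ) (hf : AEStronglyMeasurable f (volume.restrict (Set.Ioi 0)))
    (hb : ∀ r, 0 < r → ‖f r‖ ≤ A * (LL (lam * r ^ k) * r ^ (2 * n - 1))) :
    IntegrableOn f (Set.Ioi 0) := by
  have hl0 : 0 < lam := lt_of_lt_of_le (Real.exp_pos 1) hl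
  rw [← Set.Ioc_union_Ioi_eq_Ioi (zero_le_one), integrableOn_union]
  constructor
  · refine Integrable.mono' (g := fun _ => A) (integrableOn_const (by simp)) 
      (hf.mono_measure (Measure.restrict_mono Set.Ioc_subset_Ioi_self le_rfl)) 
      ((ae_restrict_iff' measurableSet_Ioc).2 (Filter.Eventually.of_forall fun x hx => ?_))
    have hx0 : 0 < x := hx.1
    refine (hb x hx0).trans (mul_le_of_le_one_right hA ?_)
    exact mul_le_one₀ (LL_le_one _ (by positivity)) (by positivity) (pow_le_one₀ hx0.le hx.2)
  · refine Integrable.mono' (g := fun r => A * (((3 + 2 * k) * Real.log lam / lam) * r ^ (-(3/2) : ℝ)))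
      (((integrableOn_Ioi_rpow_of_lt (by norm_num) one_pos).const_mul _).const_mul _)
      (hf.mono_measure (Measure.restrict_mono (Set.Ioi_subset_Ioi zero_le_one) le_rfl)) 
      ((ae_restrict_iff' measurableSet_Ioi).2 (Filter.Eventually.of_forall fun x hx => ?_))
    have hx1 : 1 < x := hx
    exact (hb x (by linarith)).trans (mul_le_mul_of_nonneg_left (tailBd k n hn hkn lam x hl hx1.le) hA)

lemma lemE (k n : ℕ) (hn : 0 < n) (hkn : 2 * n < k) (lam A : ℝ) (hl : Real.exp 1 ≤ lam) (hA : 0 ≤ A)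
    (f : ℝ → ℂ) 
    (hb : ∀ r, 0 < r → ‖f r‖ ≤ A * (min r 1 * LL (lam * r ^ k) * r ^ (2 * n - 1))) :
    ‖∫ r in Set.Ioi (0:ℝ), f r‖ ≤ (A * (10 + 4 * k)) * lam ^ (-((2 * (n : ℝ) + 1) / (k : ℝ))) * (Real.log lam) ^ 2 := by
  have he : 2 ≤ lam := by
    have := Real.add_one_le_exp 1
    linarith
  have hlog : 1 ≤ Real.log lam := by
    rw [Real.le_log_iff_exp_le (by linarith)]; exact hl
  have hl0 : 0 < lam := by linarith
  have hli : lam⁻¹ ≤ 1 := inv_le_one_of_one_le₀ (by linarith)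
  have hli0 : 0 < lam⁻¹ := by positivity
  have hk0 : (0:ℝ) < k := by exact_mod_cast (by omega : 0 < k)
  have hσ1 : (2 * (n : ℝ) + 1) / (k : ℝ) ≤ 1 := by
    rw [div_le_one hk0]
    exact_mod_cast hkn
  have hinv : lam⁻¹ ≤ lam ^ (-((2 * (n : ℝ) + 1) / (k : ℝ))) := by
    rw [← Real.rpow_neg_one]
    exact Real.rpow_le_rpow_of_exponent_le (by linarith) (by linarith)
  set c1 := 3 * Real.log lam * lam ^ (-((2 * (n : ℝ) + 1) / (k : ℝ))) with hc1
  set c2 := (3 + 2 * k) * Real.log lam / lam with hc2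
  set g1 : ℝ → ℝ := Set.indicator (Set.Ioc 0 lam⁻¹) (fun _ => 1) with hg1
  set g2 : ℝ → ℝ := Set.indicator (Set.Ioc lam⁻¹ 1) (fun r => c1 * r⁻¹) with hg2
  set g3 : ℝ → ℝ := Set.indicator (Set.Ioi 1) (fun r => c2 * r ^ (-(3/2) : ℝ)) with hg3
  have i1 : Integrable g1 := by
    rw [hg1, integrable_indicator_iff measurableSet_Ioc]
    exact integrableOn_const (by simp)
  have i2 : Integrable g2 := by
    rw [hg2, integrable_indicator_iff measurableSet_Ioc, ← intervalIntegrable_iff_integrableOn_Ioc_of_le hli]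
    apply IntervalIntegrable.const_mul
    apply intervalIntegral.intervalIntegrable_inv (f := fun x => x)
    · intro x hx
      rw [Set.uIcc_of_le hli] at hx
      have := hx.1
      linarith
    · fun_prop
  have i3 : Integrable g3 := by
    rw [hg3, integrable_indicator_iff measurableSet_Ioi]
    exact (integrableOn_Ioi_rpow_of_lt (by norm_num) one_pos).const_mul _
  have e1 : ∫ r, g1 r = lam⁻¹ := by
    rw [hg1, integral_indicator measurableSet_Ioc]
    simp [Measure.real, hl0.le]
  have e2 : ∫ r, g2 r = c1 * Real.log lam := by
    rw [hg2, integral_indicator measurableSet_Ioc, ← intervalIntegral.integral_of_le hli,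
      intervalIntegral.integral_const_mul, integral_inv_of_pos hli0 one_pos]
    simp
  have e3 : ∫ r, g3 r = c2 * 2 := by
    rw [hg3, integral_indicator measurableSet_Ioi, integral_const_mul, integral_Ioi_rpow_of_lt (by norm_num) one_pos]
    norm_num
  have key : ∀ r, ‖Set.indicator (Set.Ioi 0) f r‖ ≤ A * (g1 r + g2 r + g3 r) := by
    intro r
    by_cases hr : 0 < r
    · rw [Set.indicator_of_mem (show r ∈ Set.Ioi 0 from hr)]
      refine (hb r hr).trans ?_
      gcongr
      have hLn := LL_nonneg (lam * r ^ k) (by positivity)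
      have hL1 := LL_le_one (lam * r ^ k) (by positivity)
      by_cases h1 : r ≤ lam⁻¹
      · have m1 : r ∈ Set.Ioc 0 lam⁻¹ := ⟨hr, h1⟩
        have m2 : r ∉ Set.Ioc lam⁻¹ 1 := fun h => absurd h.1 (not_lt.2 h1)
        have m3 : r ∉ Set.Ioi (1:ℝ) := fun h => absurd (lt_of_lt_of_le h h1) (not_lt.2 hli)
        simp only [hg1, hg2, hg3, Set.indicator_of_mem m1, Set.indicator_of_notMem m2, Set.indicator_of_notMem m3]
        rw [add_zero, add_zero]
        exact mul_le_one₀ (mul_le_one₀ (min_le_right _ _) hLn hL1) (by positivity) (pow_le_one₀ hr.le (h1.trans hli))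
      · by_cases h2 : r ≤ 1
        · have m1 : r ∉ Set.Ioc 0 lam⁻¹ := fun h => h1 h.2
          have m2 : r ∈ Set.Ioc lam⁻¹ 1 := ⟨not_le.1 h1, h2⟩
          have m3 : r ∉ Set.Ioi (1:ℝ) := fun h => absurd h (not_lt.2 h2)
          simp only [hg1, hg2, hg3, Set.indicator_of_notMem m1, Set.indicator_of_mem m2, Set.indicator_of_notMem m3]
          rw [add_zero, zero_add, min_eq_left h2]
          exact midBd k n hn hkn lam r hl hr h2
        · have m1 : r ∉ Set.Ioc 0 lam⁻¹ := fun h => h1 h.2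
          have m2 : r ∉ Set.Ioc lam⁻¹ 1 := fun h => h2 h.2
          have m3 : r ∈ Set.Ioi (1:ℝ) := not_le.1 h2
          simp only [hg1, hg2, hg3, Set.indicator_of_notMem m1, Set.indicator_of_notMem m2, Set.indicator_of_mem m3]
          rw [add_zero, zero_add, min_eq_right (not_le.1 h2).le, one_mul]
          exact tailBd k n hn hkn lam r hl (not_le.1 h2).le
    · rw [Set.indicator_of_notMem (show r ∉ Set.Ioi 0 from hr), norm_zero]
      have m1 : r ∉ Set.Ioc 0 lam⁻¹ := fun h => hr h.1
      have m2 : r ∉ Set.Ioc lam⁻¹ 1 := fun h => hr (hli0.trans h.1)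
      have m3 : r ∉ Set.Ioi (1:ℝ) := fun h => hr (one_pos.trans h)
      simp [hg1, hg2, hg3, Set.indicator_of_notMem m1, Set.indicator_of_notMem m2, Set.indicator_of_notMem m3]
  rw [← integral_indicator measurableSet_Ioi]
  refine (norm_integral_le_of_norm_le (((i1.add i2).add i3).const_mul A) (Filter.Eventually.of_forall key)).trans ?_
  rw [integral_const_mul]
  have : ∫ a, (g1 + g2 + g3) a = lam⁻¹ + c1 * Real.log lam + c2 * 2 := by
    rw [integral_add' (i1.add i2) i3, integral_add' i1 i2, e1, e2, e3]
  rw [this]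
  have hfin : lam⁻¹ + c1 * Real.log lam + c2 * 2 ≤ (10 + 4 * k) * (lam ^ (-((2 * (n : ℝ) + 1) / (k : ℝ))) * Real.log lam ^ 2) := by
    set q := lam ^ (-((2 * (n : ℝ) + 1) / (k : ℝ)))
    set l := Real.log lam
    have hq : 0 < q := by positivity
    have a1 : lam⁻¹ ≤ q * l ^ 2 := hinv.trans (le_mul_of_one_le_right hq.le (one_le_pow₀ hlog))
    have a2 : l * lam⁻¹ ≤ q * l ^ 2 := by
      calc l * lam⁻¹ ≤ l * q := by gcongr
        _ ≤ l * q * l := le_mul_of_one_le_right (by positivity) hlog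
        _ = _ := by ring
    calc lam⁻¹ + c1 * l + c2 * 2 = lam⁻¹ + 3 * (q * l ^ 2) + (6 + 4 * k) * (l * lam⁻¹) := by
          rw [hc1, hc2]; ring
      _ ≤ q * l ^ 2 + 3 * (q * l ^ 2) + (6 + 4 * k) * (q * l ^ 2) := by gcongr
      _ = _ := by ring
  calc _ ≤ A * ((10 + 4 * k) * (lam ^ (-((2 * (n : ℝ) + 1) / (k : ℝ))) * Real.log lam ^ 2)) := mul_le_mul_of_nonneg_left hfin hA
    _ = _ := by ring

lemma setupA (a : ℝ × ℝ × ℝ → ℂ) (ha : ContDiff ℝ (⊤ : ℕ∞) a) (hca : HasCompactSupport a) :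
    ∃ (a' : ℝ × ℝ × ℝ → ℂ) (R B : ℝ), 1 ≤ R ∧ 0 ≤ B ∧ Continuous a' ∧
      (∀ t r v, HasDerivAt (fun v => a (t, r, v)) (a' (t, r, v)) v) ∧
      (∀ p, ‖a p‖ ≤ B) ∧ (∀ p, ‖a' p‖ ≤ B) ∧
      (∀ t r v, R < |v| → a (t, r, v) = 0) ∧ (∀ t r v, R < |v| → a' (t, r, v) = 0) ∧
      (∀ t r v, R < |t| → a (t, r, v) = 0) ∧
      (∀ t r v, 0 < r → ‖a (t, r, v) - a (t, 0, v)‖ ≤ B * r) ∧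
      (∀ t r v, 0 < r → ‖a' (t, r, v) - a' (t, 0, v)‖ ≤ B * r) := by
  set a' : ℝ × ℝ × ℝ → ℂ := fun p => fderiv ℝ a p (0, 0, 1) with ha'
  have hda' : ContDiff ℝ 1 a' := by
    have h : ContDiff ℝ 1 (fderiv ℝ a) := ha.fderiv_right (by norm_cast)
    exact h.clm_apply contDiff_const
  have hca' : HasCompactSupport a' := hca.fderiv_apply ℝ _
  obtain ⟨R, hR⟩ := hca.isCompact.isBounded.subset_closedBall (0 : ℝ × ℝ × ℝ)
  obtain ⟨B1, hB1⟩ := hca.exists_bound_of_continuous ha.continuous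
  obtain ⟨B2, hB2⟩ := hca'.exists_bound_of_continuous hda'.continuous
  obtain ⟨B3, hB3⟩ := ha.lipschitzWith_of_hasCompactSupport hca (by simp)
  obtain ⟨B4, hB4⟩ := hda'.lipschitzWith_of_hasCompactSupport hca' (by simp)
  have hts : ∀ p, p ∉ tsupport a → a p = 0 ∧ a' p = 0 := by
    intro p hp
    refine ⟨image_eq_zero_of_notMem_tsupport hp, ?_⟩
    rw [ha']
    have : fderiv ℝ a p = 0 := by
      by_contra h
      exact hp (support_fderiv_subset ℝ h)
    simp [this]
  have hv : ∀ t r v : ℝ, max R 1 < |v| → (t, r, v) ∉ tsupport a := by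
    intro t r v h hp
    have := hR hp
    rw [mem_closedBall_zero_iff] at this
    have h2 : |v| ≤ ‖(t, r, v)‖ := by
      simp [Prod.norm_def]
    have := le_max_left R 1
    linarith
  have ht : ∀ t r v : ℝ, max R 1 < |t| → (t, r, v) ∉ tsupport a := by
    intro t r v h hp
    have := hR hp
    rw [mem_closedBall_zero_iff] at this
    have h2 : |t| ≤ ‖(t, r, v)‖ := by
      simp [Prod.norm_def]
    have := le_max_left R 1
    linarith
  have hdist : ∀ t r v : ℝ, 0 < r → dist ((t, r, v) : ℝ × ℝ × ℝ) (t, 0, v) = r := by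
    intro t r v hr
    simp [Prod.dist_eq, hr.le, abs_of_pos hr]
  have hB10 : 0 ≤ B1 := (norm_nonneg _).trans (hB1 0)
  have hB20 : 0 ≤ B2 := (norm_nonneg _).trans (hB2 0)
  have hB30 : (0:ℝ) ≤ B3 := B3.2
  have hB40 : (0:ℝ) ≤ B4 := B4.2
  refine ⟨a', max R 1, B1 + B2 + B3 + B4, le_max_right _ _, by positivity, hda'.continuous, ?_, ?_, ?_, ?_, ?_, ?_, ?_, ?_⟩
  · intro t r v
    have h1 : HasFDerivAt a (fderiv ℝ a (t, r, v)) (t, r, v) :=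
      ((ha.differentiable (by simp)) _).hasFDerivAt
    have h2 : HasDerivAt (fun v : ℝ => ((t, r, v) : ℝ × ℝ × ℝ)) (0, 0, 1) v :=
      (hasDerivAt_const v t).prodMk ((hasDerivAt_const v r).prodMk (hasDerivAt_id v))
    exact h1.comp_hasDerivAt v h2
  · intro p; linarith [hB1 p]
  · intro p; linarith [hB2 p]
  · intro t r v h; exact (hts _ (hv t r v h)).1
  · intro t r v h; exact (hts _ (hv t r v h)).2
  · intro t r v h; exact (hts _ (ht t r v h)).1
  · intro t r v hr
    have := hB3.dist_le_mul (t, r, v) (t, 0, v)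
    rw [hdist t r v hr, dist_eq_norm] at this
    nlinarith
  · intro t r v hr
    have := hB4.dist_le_mul (t, r, v) (t, 0, v)
    rw [hdist t r v hr, dist_eq_norm] at this
    nlinarith

theorem stmt_0 (k n : ℕ) (hk : 0 < k) (hn : 0 < n) (hkn : 2 * n < k)
    (a : ℝ × ℝ × ℝ → ℂ) (ha : ContDiff ℝ (⊤ : ℕ∞) a) (hca : HasCompactSupport a) :
    ∃ C Λ : ℝ, ∀ lam : ℝ, Λ ≤ lam →
      ‖(∫ r in Set.Ioi (0:ℝ), ∫ t : ℝ, ∫ v : ℝ,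
            Complex.exp (Complex.I * ((lam * t * r ^ k * v : ℝ) : ℂ)) * a (t, r, v)
              * (r : ℂ) ^ (2 * n - 1))
        - ((lam ^ (-((2 * n : ℝ) / (k : ℝ))) : ℝ) : ℂ) *
            (((Real.Gamma ((2 * n : ℝ) / (k : ℝ)) / (k : ℝ) : ℝ) : ℂ) *
              ∫ t : ℝ, ∫ v : ℝ,
                ((|t * v| ^ (-((2 * n : ℝ) / (k : ℝ))) : ℝ) : ℂ) *
                  Complex.exp (Complex.I *
                    ((Real.pi * ((n : ℝ) / (k : ℝ)) * Real.sign (t * v) : ℝ) : ℂ)) *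
                  a (t, 0, v))‖
      ≤ C * lam ^ (-((2 * (n : ℝ) + 1) / (k : ℝ))) * (Real.log lam) ^ 2 := by
  obtain ⟨a', R, B, hR, hB, hca', hder, hbd, hbd', hv0, hv0', ht0, hlip, hlip'⟩ := setupA a ha hca
  obtain ⟨K, hK0, hK⟩ := lemA R hR
  have hk' : (0:ℝ) < k := by exact_mod_cast hk
  have hn' : (0:ℝ) < n := by exact_mod_cast hn
  have hac : Continuous a := ha.continuous
  have hs0 : 0 < (2 * n : ℝ) / (k : ℝ) := by positivity
  have hs1 : (2 * n : ℝ) / (k : ℝ) < 1 := by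
    rw [div_lt_one hk']; exact_mod_cast hkn
  -- the inner integral
  set F : ℝ → ℝ → ℂ := fun μ r => ∫ t : ℝ, ∫ v : ℝ,
    Complex.exp (Complex.I * ((μ * t * v : ℝ) : ℂ)) * a (t, r, v) with hF
  have hFb : ∀ μ r, 0 < μ → ‖F μ r‖ ≤ K * B * LL μ := by
    intro μ r hμ
    exact hK B (fun t v => a (t, r, v)) (fun t v => a' (t, r, v)) hB (fun t => by fun_prop)
      (fun t => by fun_prop) (fun t v => hder t r v) (fun t v => hbd _) (fun t v => hbd' _)
      (fun t v h => hv0 t r v h) (fun t v h => hv0' t r v h) (fun t v h => ht0 t r v h) μ hμ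
  have hii : ∀ μ r, Integrable (fun p : ℝ × ℝ =>
      Complex.exp (Complex.I * ((μ * p.1 * p.2 : ℝ) : ℂ)) * a (p.1, r, p.2)) := by
    intro μ r
    apply Continuous.integrable_of_hasCompactSupport (by fun_prop)
    apply HasCompactSupport.of_support_subset_isCompact (K := Set.Icc (-R) R ×ˢ Set.Icc (-R) R)
      (isCompact_Icc.prod isCompact_Icc)
    intro p hp
    have hp' : a (p.1, r, p.2) ≠ 0 := right_ne_zero_of_mul hp
    exact ⟨abs_le.1 (not_lt.1 fun h => hp' (ht0 _ _ _ h)), abs_le.1 (not_lt.1 fun h => hp' (hv0 _ _ _ h))⟩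
  have hsub : ∀ μ r, F μ r - F μ 0 = ∫ t : ℝ, ∫ v : ℝ,
      Complex.exp (Complex.I * ((μ * t * v : ℝ) : ℂ)) * (a (t, r, v) - a (t, 0, v)) := by
    intro μ r
    have e1 := integral_prod _ (hii μ r)
    have e2 := integral_prod _ (hii μ 0)
    have e3 := integral_prod _ ((hii μ r).sub (hii μ 0))
    have e4 := integral_sub' (hii μ r) (hii μ 0)
    rw [Measure.volume_eq_prod] at e4
    rw [e4, e1, e2] at e3
    simp only [hF]
    refine e3.trans ?_
    simp only [Pi.sub_apply, mul_sub]
  have hFd : ∀ μ r, 0 < μ → 0 < r → ‖F μ r - F μ 0‖ ≤ K * (2 * B * min r 1) * LL μ := by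
    intro μ r hμ hr
    rw [hsub]
    have hm : ∀ x : ℝ, x ≤ B * r → x ≤ 2 * B → x ≤ 2 * B * min r 1 := by
      intro x h1 h2
      rcases le_total r 1 with h | h
      · rw [min_eq_left h]; nlinarith
      · rw [min_eq_right h]; linarith
    refine hK (2 * B * min r 1) (fun t v => a (t, r, v) - a (t, 0, v)) (fun t v => a' (t, r, v) - a' (t, 0, v))
      (by positivity) (fun t => by fun_prop)
      (fun t => by fun_prop) (fun t v => (hder t r v).sub (hder t 0 v))
      (fun t v => hm _ (hlip t r v hr) ?_) (fun t v => hm _ (hlip' t r v hr) ?_)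
      (fun t v h => by simp [hv0 t _ v h]) (fun t v h => by simp [hv0' t _ v h])
      (fun t v h => by simp [ht0 t _ v h]) μ hμ
    · exact (norm_sub_le _ _).trans (by linarith [hbd (t, r, v), hbd (t, 0, v)])
    · exact (norm_sub_le _ _).trans (by linarith [hbd' (t, r, v), hbd' (t, 0, v)])
  have hmeas : ∀ (lam : ℝ) (g : ℝ → ℝ), Continuous g → StronglyMeasurable (fun r : ℝ => F (lam * r ^ k) (g r)) := by
    intro lam g hg
    have hc : Continuous (fun q : (ℝ × ℝ) × ℝ => Complex.exp (Complex.I *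
        ((lam * q.1.1 ^ k * q.1.2 * q.2 : ℝ) : ℂ)) * a (q.1.2, g q.1.1, q.2)) := by fun_prop
    exact (hc.stronglyMeasurable.integral_prod_right).integral_prod_right
  have hC := lemC ((2 * n : ℝ) / (k : ℝ)) hs0 hs1 (fun p => a (p.1, 0, p.2)) (by fun_prop) R B (K * B)
    (by linarith) hB (fun p => hbd _) (fun t v h => ht0 t 0 v h) (fun t v h => hv0 t 0 v h)
    (fun μ hμ => hFb μ 0 hμ)
  refine ⟨(K * (2 * B)) * (10 + 4 * k), Real.exp 1, fun lam hlam => ?_⟩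
  have hl0 : 0 < lam := lt_of_lt_of_le (Real.exp_pos 1) hlam
  have hI : ∀ r : ℝ, ∫ t : ℝ, ∫ v : ℝ,
            Complex.exp (Complex.I * ((lam * t * r ^ k * v : ℝ) : ℂ)) * a (t, r, v)
              * (r : ℂ) ^ (2 * n - 1) = F (lam * r ^ k) r * (r : ℂ) ^ (2 * n - 1) := by
    intro r
    simp_rw [integral_mul_const]
    simp only [hF]
    congr 1
    refine integral_congr_ae (Filter.Eventually.of_forall fun t => ?_)
    refine integral_congr_ae (Filter.Eventually.of_forall fun v => ?_)
    simp only
    congr 4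
    ring
  simp_rw [hI]
  have hmain : ((lam ^ (-((2 * n : ℝ) / (k : ℝ))) : ℝ) : ℂ) *
            (((Real.Gamma ((2 * n : ℝ) / (k : ℝ)) / (k : ℝ) : ℝ) : ℂ) *
              ∫ t : ℝ, ∫ v : ℝ,
                ((|t * v| ^ (-((2 * n : ℝ) / (k : ℝ))) : ℝ) : ℂ) *
                  Complex.exp (Complex.I *
                    ((Real.pi * ((n : ℝ) / (k : ℝ)) * Real.sign (t * v) : ℝ) : ℂ)) *
                  a (t, 0, v)) = ∫ r in Set.Ioi (0:ℝ), F (lam * r ^ k) 0 * (r:ℂ) ^ (2 * n - 1) := by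
    rw [lemD k n hk hn (fun μ => F μ 0) lam hl0]
    simp only [hF]
    rw [hC]
    have : (2 * n : ℝ) / (k : ℝ) / 2 = (n : ℝ) / (k : ℝ) := by ring
    rw [this]
    push_cast
    ring
  rw [hmain]
  have hnr : ∀ r : ℝ, 0 < r → ‖(r:ℂ) ^ (2 * n - 1)‖ = r ^ (2 * n - 1) := by
    intro r hr
    rw [norm_pow, Complex.norm_real, Real.norm_of_nonneg hr.le]
  have hpm : Measurable (fun r : ℝ => (r:ℂ) ^ (2 * n - 1)) := by fun_prop
  have j : ∀ g : ℝ → ℝ, Continuous g →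
      IntegrableOn (fun r : ℝ => F (lam * r ^ k) (g r) * (r:ℂ) ^ (2 * n - 1)) (Set.Ioi 0) := by
    intro g hg
    refine intBd k n hn hkn lam (K * B) hlam (by positivity) _
      (((hmeas lam g hg).mul hpm.stronglyMeasurable).aestronglyMeasurable) fun r hr => ?_
    rw [norm_mul, hnr r hr, ← mul_assoc]
    gcongr
    exact hFb _ _ (by positivity)
  rw [← integral_sub (j (fun r => r) continuous_id) (j (fun _ => 0) continuous_const)]
  refine lemE k n hn hkn lam (K * (2 * B)) hlam (by positivity) _ fun r hr => ?_
  rw [← sub_mul, norm_mul, hnr r hr]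
  calc _ ≤ K * (2 * B * min r 1) * LL (lam * r ^ k) * r ^ (2 * n - 1) := by
        gcongr
        exact hFd _ _ (by positivity) hr
    _ = _ := by ring
end

section
/- Let n be a positive integer and let a : ℝ³ → ℂ be a smooth compactly supported function. Then, as λ → +∞, ∫₀^∞ ∫_{ℝ²} e^{iλ t r^{2n} v} a(t,r,v) r^{2n−1} dt dv dr = (π/n) λ^{−1} (log λ) a(0,0,0) + O(λ^{−1}). -/
open MeasureTheory

lemma int_bound (g : ℝ → ℂ) (R C : ℝ) (hR : 0 ≤ R) (h0 : ∀ x, R < |x| → g x = 0)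
    (hC : ∀ x, ‖g x‖ ≤ C) : ‖∫ x, g x‖ ≤ C * (2 * R) := by
  have h1 : ∫ x in Set.Icc (-R) R, g x = ∫ x, g x := by
    apply setIntegral_eq_integral_of_forall_compl_eq_zero
    intro x hx
    apply h0
    by_contra h
    exact hx (abs_le.mp (not_lt.mp h))
  rw [← h1]
  have := norm_setIntegral_le_of_norm_le_const (μ := volume) (s := Set.Icc (-R) R) (f := g) (C := C)
    (by simp) (fun x _ => hC x)
  rw [Measure.real, Real.volume_Icc, ENNReal.toReal_ofReal (by linarith)] at this
  linarith [this]

noncomputable def FF (a : ℝ × ℝ × ℝ → ℂ) (t r s : ℝ) : ℂ :=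
  ∫ v : ℝ, Complex.exp (Complex.I * ((s * v : ℝ) : ℂ)) * a (t, r, v)

lemma norm_e (x : ℝ) : ‖Complex.exp (Complex.I * (x : ℂ))‖ = 1 := by
  rw [mul_comm]; exact Complex.norm_exp_ofReal_mul_I x

lemma supp (a : ℝ × ℝ × ℝ → ℂ) (hca : HasCompactSupport a) :
    ∃ R : ℝ, 1 ≤ R ∧ ∀ t r v : ℝ, (R < |t| ∨ R < |r| ∨ R < |v|) → a (t, r, v) = 0 := by
  obtain ⟨R, hR⟩ := hca.isCompact.isBounded.exists_norm_le
  refine ⟨max R 1, le_max_right _ _, fun t r v h => ?_⟩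
  by_contra hne
  have h1 := hR (t, r, v) (subset_tsupport _ hne)
  simp only [Prod.norm_def, Real.norm_eq_abs, sup_le_iff] at h1
  have := le_max_left R 1
  rcases h with h | h | h <;> linarith

lemma bdd (a : ℝ × ℝ × ℝ → ℂ) (ha : Continuous a) (hca : HasCompactSupport a) :
    ∃ C : ℝ, 0 ≤ C ∧ ∀ p, ‖a p‖ ≤ C := by
  obtain ⟨C, hC⟩ := hca.exists_bound_of_continuous ha
  exact ⟨C, (norm_nonneg _).trans (hC 0), hC⟩

lemma FF_bdd (a : ℝ × ℝ × ℝ → ℂ) (ha : Continuous a) (hca : HasCompactSupport a) :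
    ∃ C : ℝ, 0 ≤ C ∧ ∀ t r s, ‖FF a t r s‖ ≤ C := by
  obtain ⟨C, hC0, hC⟩ := bdd a ha hca
  obtain ⟨R, hR1, hR⟩ := supp a hca
  refine ⟨C * (2 * R), by positivity, fun t r s => int_bound _ R C (by linarith) ?_ ?_⟩
  · intro x hx; rw [hR _ _ _ (Or.inr (Or.inr hx)), mul_zero]
  · intro x; rw [norm_mul, norm_e, one_mul]; exact hC _

lemma slice_int (a : ℝ × ℝ × ℝ → ℂ) (ha : Continuous a) (hca : HasCompactSupport a) (t r s : ℝ) :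
    Integrable (fun v : ℝ => Complex.exp (Complex.I * ((s * v : ℝ) : ℂ)) * a (t, r, v)) := by
  obtain ⟨R, hR1, hR⟩ := supp a hca
  apply Continuous.integrable_of_hasCompactSupport (by fun_prop)
  apply HasCompactSupport.intro (isCompact_Icc (a := -R) (b := R))
  intro x hx
  rw [hR _ _ _ (Or.inr (Or.inr _)), mul_zero]
  by_contra h
  exact hx (abs_le.mp (not_lt.mp h))

lemma lip (a : ℝ × ℝ × ℝ → ℂ) (ha : ContDiff ℝ (⊤ : ℕ∞) a) (hca : HasCompactSupport a) :
    ∃ L : ℝ, 0 ≤ L ∧ ∀ p q, ‖a p - a q‖ ≤ L * ‖p - q‖ := by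
  obtain ⟨C, hC⟩ := (hca.fderiv (𝕜 := ℝ)).exists_bound_of_continuous (ha.continuous_fderiv (by simp))
  refine ⟨C, (norm_nonneg _).trans (hC 0), fun p q => ?_⟩
  exact convex_univ.norm_image_sub_le_of_norm_fderiv_le (fun x _ => (ha.differentiable (by simp)) x)
    (fun x _ => hC x) trivial trivial

lemma FF_lip (a : ℝ × ℝ × ℝ → ℂ) (ha : ContDiff ℝ (⊤ : ℕ∞) a) (hca : HasCompactSupport a) :
    ∃ C : ℝ, 0 ≤ C ∧ ∀ t r s, ‖FF a t r s - FF a 0 r s‖ ≤ C * |t| := by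
  obtain ⟨L, hL0, hL⟩ := lip a ha hca
  obtain ⟨R, hR1, hR⟩ := supp a hca
  refine ⟨L * (2 * R), by positivity, fun t r s => ?_⟩
  unfold FF
  rw [← integral_sub (slice_int a ha.continuous hca _ _ _) (slice_int a ha.continuous hca _ _ _)]
  refine (int_bound _ R (L * |t|) (by linarith) ?_ ?_).trans (by linarith)
  · intro x hx; rw [hR _ _ _ (Or.inr (Or.inr hx)), hR _ _ _ (Or.inr (Or.inr hx))]; simp
  · intro x; rw [← mul_sub, norm_mul, norm_e, one_mul]
    refine (hL _ _).trans (le_of_eq ?_)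
    simp [Prod.norm_def]

lemma dv (a : ℝ × ℝ × ℝ → ℂ) (ha : ContDiff ℝ (⊤ : ℕ∞) a) (hca : HasCompactSupport a) :
    ∃ b : ℝ × ℝ × ℝ → ℂ, ContDiff ℝ (⊤ : ℕ∞) b ∧ HasCompactSupport b ∧
      ∀ t r s, FF b t r s = -(Complex.I * s) * FF a t r s := by
  have hb : ContDiff ℝ (⊤ : ℕ∞) (fun p => fderiv ℝ a p (0, 0, 1)) :=
    (ha.fderiv_right (m := (⊤ : ℕ∞)) (by simp)).clm_apply contDiff_const
  have hcb : HasCompactSupport (fun p => fderiv ℝ a p (0, 0, 1)) := hca.fderiv_apply (𝕜 := ℝ) _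
  refine ⟨_, hb, hcb, fun t r s => ?_⟩
  have hd : ∀ v : ℝ, HasDerivAt (fun v : ℝ => Complex.exp (Complex.I * ((s * v : ℝ) : ℂ)) * a (t, r, v))
      ((Complex.I * s) * (Complex.exp (Complex.I * ((s * v : ℝ) : ℂ)) * a (t, r, v)) +
        Complex.exp (Complex.I * ((s * v : ℝ) : ℂ)) * fderiv ℝ a (t, r, v) (0, 0, 1)) v := by
    intro v
    have h1 : HasDerivAt (fun v : ℝ => (t, r, v)) ((0 : ℝ), (0 : ℝ), (1 : ℝ)) v :=
      (hasDerivAt_const v t).prodMk ((hasDerivAt_const v r).prodMk (hasDerivAt_id v))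
    have h2 := ((ha.differentiable (by simp)) (t, r, v)).hasFDerivAt.comp_hasDerivAt v h1
    have h3 : HasDerivAt (fun v : ℝ => Complex.I * ((s * v : ℝ) : ℂ)) (Complex.I * s) v := by
      have := (((hasDerivAt_id v).const_mul s).ofReal_comp).const_mul Complex.I
      simpa using this
    refine (h3.cexp.mul h2).congr_deriv ?_
    simp only [Function.comp_apply]
    ring
  have i1 := slice_int a ha.continuous hca t r s
  have i2 := slice_int _ hb.continuous hcb t r s
  have := integral_eq_zero_of_hasDerivAt_of_integrable hd ((i1.const_mul _).add i2) i1
  rw [integral_add (i1.const_mul _) i2, integral_const_mul] at this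
  unfold FF
  linear_combination this

lemma dd (a : ℝ × ℝ × ℝ → ℂ) (ha : ContDiff ℝ (⊤ : ℕ∞) a) (hca : HasCompactSupport a) :
    ∃ b : ℝ × ℝ × ℝ → ℂ, ContDiff ℝ (⊤ : ℕ∞) b ∧ HasCompactSupport b ∧
      ∀ t r s, FF b t r s = ((1 + s ^ 2 : ℝ) : ℂ) * FF a t r s := by
  obtain ⟨b, hb, hcb, h1⟩ := dv a ha hca
  obtain ⟨c, hc, hcc, h2⟩ := dv b hb hcb
  refine ⟨fun p => a p - c p, ha.sub hc, hca.sub hcc, fun t r s => ?_⟩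
  have : FF (fun p => a p - c p) t r s = FF a t r s - FF c t r s := by
    unfold FF
    rw [← integral_sub (slice_int a ha.continuous hca _ _ _) (slice_int c hc.continuous hcc _ _ _)]
    simp only [mul_sub]
  rw [this, h2, h1]
  push_cast
  linear_combination (- (s:ℂ)^2 * FF a t r s) * Complex.I_sq

lemma FF_decay (a : ℝ × ℝ × ℝ → ℂ) (ha : ContDiff ℝ (⊤ : ℕ∞) a) (hca : HasCompactSupport a) :
    ∃ C : ℝ, 0 ≤ C ∧ ∀ t r s, ‖FF a t r s‖ ≤ C * (1 + s ^ 2)⁻¹ := by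
  obtain ⟨b, hb, hcb, h⟩ := dd a ha hca
  obtain ⟨C, hC0, hC⟩ := FF_bdd b hb.continuous hcb
  refine ⟨C, hC0, fun t r s => ?_⟩
  have := hC t r s
  have hp : (0:ℝ) < 1 + s ^ 2 := by positivity
  rw [h, norm_mul, Complex.norm_real, Real.norm_of_nonneg hp.le] at this
  rw [← div_eq_mul_inv, le_div_iff₀ hp]; linarith

lemma FF_lip_decay (a : ℝ × ℝ × ℝ → ℂ) (ha : ContDiff ℝ (⊤ : ℕ∞) a) (hca : HasCompactSupport a) :
    ∃ C : ℝ, 0 ≤ C ∧ ∀ m : ℝ, 0 < m → ∀ r s,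
      ‖FF a (s / m) r s - FF a 0 r s‖ ≤ C / m * (1 + s ^ 2)⁻¹ := by
  obtain ⟨b, hb, hcb, h⟩ := dd a ha hca
  obtain ⟨c, hc, hcc, h'⟩ := dd b hb hcb
  obtain ⟨C, hC0, hC⟩ := FF_lip c hc hcc
  refine ⟨C, hC0, fun m hm r s => ?_⟩
  have := hC (s / m) r s
  have hp : (0:ℝ) < 1 + s ^ 2 := by positivity
  rw [h', h', h, h, ← mul_sub, ← mul_sub, norm_mul, norm_mul, Complex.norm_real,
    Real.norm_of_nonneg hp.le, abs_div, abs_of_pos hm] at this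
  set X := ‖FF a (s / m) r s - FF a 0 r s‖
  have hs : |s| ≤ 1 + s ^ 2 := by
    nlinarith [sq_abs s, sq_nonneg (|s| - 1), abs_nonneg s]
  rw [← div_eq_mul_inv, le_div_iff₀ hp]
  have h2 : C * (|s| / m) ≤ C / m * (1 + s ^ 2) := by
    rw [mul_div_assoc', div_mul_eq_mul_div]
    gcongr
  have h3 : (1 + s ^ 2) * (X * (1 + s ^ 2)) ≤ (1 + s ^ 2) * (C / m) := by linarith
  exact le_of_mul_le_mul_left h3 hp

lemma FF_meas (a : ℝ × ℝ × ℝ → ℂ) (ha : Continuous a) (f : ℝ → ℝ) (hf : Continuous f) (r : ℝ) :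
    StronglyMeasurable (fun s => FF a (f s) r s) := by
  unfold FF
  apply StronglyMeasurable.integral_prod_right' (f := fun p : ℝ × ℝ => Complex.exp (Complex.I * ((p.1 * p.2 : ℝ) : ℂ)) * a (f p.1, r, p.2))
  exact Continuous.stronglyMeasurable (by fun_prop)

lemma FF_integrable (a : ℝ × ℝ × ℝ → ℂ) (ha : ContDiff ℝ (⊤ : ℕ∞) a) (hca : HasCompactSupport a)
     (f : ℝ → ℝ) (hf : Continuous f) (r : ℝ) :
    Integrable (fun s => FF a (f s) r s) := by
  obtain ⟨C, hC0, hC⟩ := FF_decay a ha hca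
  exact (integrable_inv_one_add_sq.const_mul C).mono' (FF_meas a ha.continuous f hf r).aestronglyMeasurable
    (Filter.Eventually.of_forall fun s => hC _ _ _)

lemma FF_inv (a : ℝ × ℝ × ℝ → ℂ) (ha : ContDiff ℝ (⊤ : ℕ∞) a) (hca : HasCompactSupport a) (r : ℝ) :
    ∫ s, FF a 0 r s = ((2 * Real.pi : ℝ) : ℂ) * a (0, r, 0) := by
  have hc := ha.continuous
  have i0 : Integrable (fun v => a (0, r, v)) := by
    have := slice_int a hc hca 0 r 0
    simpa using this
  have hF : ∀ w : ℝ, FourierTransform.fourier (fun v => a (0, r, v)) w = FF a 0 r ((-2 * Real.pi) * w) := by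
    intro w
    rw [Real.fourier_real_eq_integral_exp_smul]
    unfold FF
    congr 1
    ext v
    rw [smul_eq_mul]
    congr 2
    push_cast; ring
  have i1 := FF_integrable a ha hca (fun _ => 0) continuous_const r
  have i2 : Integrable (FourierTransform.fourier (fun v => a (0, r, v))) := by
    have : FourierTransform.fourier (fun v => a (0, r, v)) = fun w => FF a 0 r ((-2 * Real.pi) * w) := funext hF
    rw [this]
    exact i1.comp_mul_left' (by simp [Real.pi_ne_zero])
  have h := congrFun (Continuous.fourierInv_fourier_eq (f := fun v => a (0, r, v)) (by fun_prop) i0 i2) 0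
  rw [Real.fourierInv_eq'] at h
  simp only [inner_zero_right, mul_zero, Complex.ofReal_zero, zero_mul, Complex.exp_zero, one_smul, hF] at h
  rw [Measure.integral_comp_mul_left (fun s => FF a 0 r s)] at h
  rw [← h, abs_inv, abs_mul, abs_neg, abs_of_pos Real.pi_pos, abs_of_pos (by norm_num : (0:ℝ) < 2), Complex.real_smul]
  have := Real.pi_ne_zero
  push_cast
  field_simp

lemma J_asymp (a : ℝ × ℝ × ℝ → ℂ) (ha : ContDiff ℝ (⊤ : ℕ∞) a) (hca : HasCompactSupport a) :
    ∃ C : ℝ, 0 ≤ C ∧ ∀ m : ℝ, 0 < m → ∀ r,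
      ‖(∫ t, FF a t r (m * t)) - ((2 * Real.pi / m : ℝ) : ℂ) * a (0, r, 0)‖ ≤ C / m ^ 2 := by
  obtain ⟨C, hC0, hC⟩ := FF_lip_decay a ha hca
  refine ⟨C * Real.pi, by positivity, fun m hm r => ?_⟩
  have h1 : (∫ t, FF a t r (m * t)) = ((m⁻¹ : ℝ) : ℂ) * ∫ s, FF a (s / m) r s := by
    have := Measure.integral_comp_mul_left (fun s => FF a (s / m) r s) m
    rw [abs_of_pos (inv_pos.2 hm), Complex.real_smul] at this
    rw [← this]
    congr 1; ext t
    rw [mul_div_cancel_left₀ _ hm.ne']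
  have h2 : ((2 * Real.pi / m : ℝ) : ℂ) * a (0, r, 0) = ((m⁻¹ : ℝ) : ℂ) * ∫ s, FF a 0 r s := by
    rw [FF_inv a ha hca]; push_cast; ring
  rw [h1, h2, ← mul_sub, ← integral_sub (FF_integrable a ha hca (fun s => s / m) (by fun_prop) r)
    (FF_integrable a ha hca (fun _ => 0) continuous_const r), norm_mul, Complex.norm_real,
    Real.norm_of_nonneg (inv_pos.2 hm).le]
  have h3 := norm_integral_le_of_norm_le (integrable_inv_one_add_sq.const_mul (C / m))
    (Filter.Eventually.of_forall fun s => hC m hm r s)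
  rw [integral_const_mul, integral_univ_inv_one_add_sq] at h3
  calc _ ≤ m⁻¹ * (C / m * Real.pi) := by gcongr
    _ = _ := by field_simp

lemma FF_zero_r (a : ℝ × ℝ × ℝ → ℂ) (R : ℝ)
    (hR : ∀ t r v : ℝ, (R < |t| ∨ R < |r| ∨ R < |v|) → a (t, r, v) = 0) (t r s : ℝ)
    (h : R < |t| ∨ R < |r|) : FF a t r s = 0 := by
  unfold FF
  have : ∀ v, a (t, r, v) = 0 := fun v => hR t r v (by tauto)
  simp [this]

lemma inv_pow_int (p : ℕ) (hp : 0 < p) (e R : ℝ) (he : 0 < e) (heR : e ≤ R) :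
    ∫ r in e..R, (r ^ (p + 1))⁻¹ ≤ (e ^ p)⁻¹ := by
  have h0 : (0:ℝ) ∉ Set.uIcc e R := by
    rw [Set.uIcc_of_le heR]; intro h; linarith [h.1]
  have h1 := integral_zpow (a := e) (b := R) (n := -((p : ℤ) + 1))
    (Or.inr ⟨by omega, h0⟩)
  have h2 : ∀ r : ℝ, r ^ (-((p : ℤ) + 1)) = (r ^ (p + 1))⁻¹ := by
    intro r; rw [zpow_neg]; norm_cast
  have h3 : ∀ r : ℝ, r ^ (-((p : ℤ) + 1) + 1) = (r ^ p)⁻¹ := by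
    intro r; rw [show -((p : ℤ) + 1) + 1 = -(p:ℤ) by ring, zpow_neg]; norm_cast
  simp only [h2, h3] at h1
  rw [h1]
  have hp1 : (1:ℝ) ≤ p := by exact_mod_cast hp
  push_cast
  rw [show (-((p:ℝ) + 1) + 1) = -p by ring, div_neg, ← neg_div, div_le_iff₀ (by linarith)]
  have hR : 0 < (R ^ p)⁻¹ := by have := he.trans_le heR; positivity
  have he' : 0 < (e ^ p)⁻¹ := by positivity
  nlinarith

theorem stmt_1 (n : ℕ) (hn : 0 < n)
    (a : ℝ × ℝ × ℝ → ℂ) (ha : ContDiff ℝ (⊤ : ℕ∞) a) (hca : HasCompactSupport a) :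
    ∃ C Λ : ℝ, ∀ lam : ℝ, Λ ≤ lam →
      ‖(∫ r in Set.Ioi (0:ℝ), ∫ t : ℝ, ∫ v : ℝ,
            Complex.exp (Complex.I * ((lam * t * r ^ (2 * n) * v : ℝ) : ℂ)) * a (t, r, v)
              * (r : ℂ) ^ (2 * n - 1))
        - ((Real.pi / (n : ℝ) * lam⁻¹ * Real.log lam : ℝ) : ℂ) * a (0, 0, 0)‖
      ≤ C * lam⁻¹ := by
  obtain ⟨R, hR1, hR⟩ := supp a hca
  obtain ⟨L, hL0, hL⟩ := lip a ha hca
  obtain ⟨K, hK0, hK⟩ := FF_bdd a ha.continuous hca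
  obtain ⟨C, hC0, hC⟩ := J_asymp a ha hca
  have hc := ha.continuous
  refine ⟨K * (2 * R) + C + 2 * Real.pi * L * R + 2 * Real.pi * Real.log R * ‖a (0, 0, 0)‖, 1,
    fun lam hlam => ?_⟩
  have hl : 0 < lam := by linarith
  set J : ℝ → ℂ := fun r => ∫ t, FF a t r (lam * r ^ (2 * n) * t) with hJ
  set G : ℝ → ℂ := fun r => J r * (r : ℂ) ^ (2 * n - 1) with hG
  have hGeq : ∀ r : ℝ, (∫ t : ℝ, ∫ v : ℝ,
            Complex.exp (Complex.I * ((lam * t * r ^ (2 * n) * v : ℝ) : ℂ)) * a (t, r, v)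
              * (r : ℂ) ^ (2 * n - 1)) = G r := by
    intro r
    simp only [hG, hJ, FF, integral_mul_const]
    congr 2
    ext t
    congr 1
    ext v
    rw [show lam * t * r ^ (2 * n) * v = lam * r ^ (2 * n) * t * v by ring]
  simp only [hGeq]
  have hJb : ∀ r, ‖J r‖ ≤ K * (2 * R) := fun r =>
    int_bound _ R K (by linarith) (fun t ht => FF_zero_r a R hR _ _ _ (Or.inl ht)) (fun t => hK _ _ _)
  have hGb : ∀ r, 0 ≤ r → ‖G r‖ ≤ K * (2 * R) * r ^ (2 * n - 1) := by
    intro r hr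
    simp only [hG]
    rw [norm_mul, norm_pow, Complex.norm_real, Real.norm_of_nonneg hr]
    exact mul_le_mul_of_nonneg_right (hJb r) (by positivity)
  have hGm : StronglyMeasurable G := by
    have h1 : StronglyMeasurable (fun p : ℝ × ℝ => FF a p.2 p.1 (lam * p.1 ^ (2 * n) * p.2)) := by
      unfold FF
      apply StronglyMeasurable.integral_prod_right' (f := fun q : (ℝ × ℝ) × ℝ =>
        Complex.exp (Complex.I * (((lam * q.1.1 ^ (2 * n) * q.1.2) * q.2 : ℝ) : ℂ)) * a (q.1.2, q.1.1, q.2))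
      exact Continuous.stronglyMeasurable (by fun_prop)
    have h2 : StronglyMeasurable J := h1.integral_prod_right'
    exact h2.mul (Continuous.stronglyMeasurable (by fun_prop))
  have hGR : ∫ r in Set.Ioi (0:ℝ), G r = ∫ r in (0:ℝ)..R, G r := by
    rw [intervalIntegral.integral_of_le (by linarith)]
    apply setIntegral_eq_of_subset_of_forall_sdiff_eq_zero measurableSet_Ioi
      Set.Ioc_subset_Ioi_self
    intro r hr
    have : R < |r| := by
      have h0 : 0 < r := hr.1
      rw [abs_of_pos h0]
      by_contra h
      exact hr.2 ⟨h0, not_lt.mp h⟩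
    have h0 : J r = 0 := by
      simp only [hJ]
      simp [FF_zero_r a R hR _ _ _ (Or.inr this)]
    simp [hG, h0]
  have hint : ∀ x y : ℝ, 0 ≤ x → x ≤ y → IntervalIntegrable G volume x y := by
    intro x y hx hxy
    have hb : IntervalIntegrable (fun r : ℝ => K * (2 * R) * r ^ (2 * n - 1)) volume x y :=
      Continuous.intervalIntegrable (by fun_prop) _ _
    refine hb.mono_fun' hGm.aestronglyMeasurable ?_
    refine (ae_restrict_iff' measurableSet_uIoc).2 (Filter.Eventually.of_forall fun r hr => ?_)
    rw [Set.uIoc_of_le hxy] at hr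
    exact hGb r (hx.trans hr.1.le)
  have hn' : (n : ℝ) ≠ 0 := by exact_mod_cast hn.ne'
  set e : ℝ := lam ^ (-(1 / (2 * n : ℝ))) with he
  have he0 : 0 < e := Real.rpow_pos_of_pos hl _
  have he1 : e ≤ 1 := Real.rpow_le_one_of_one_le_of_nonpos hlam (by
    rw [neg_nonpos]; positivity)
  have hep : e ^ (2 * n) = lam⁻¹ := by
    rw [he, ← Real.rpow_natCast, ← Real.rpow_mul hl.le, ← Real.rpow_neg_one]
    congr 1
    push_cast
    field_simp
  have helog : Real.log e = -(1 / (2 * n)) * Real.log lam := by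
    rw [he, Real.log_rpow hl]
  have heR : e ≤ R := he1.trans hR1
  have hpq : 2 * n = (2 * n - 1) + 1 := by omega
  -- first piece
  have P1 : ‖∫ r in (0:ℝ)..e, G r‖ ≤ K * (2 * R) * lam⁻¹ := by
    have := intervalIntegral.norm_integral_le_of_norm_le_const (a := 0) (b := e) (f := G)
      (C := K * (2 * R) * e ^ (2 * n - 1)) (by
        intro r hr
        rw [Set.uIoc_of_le he0.le] at hr
        refine (hGb r hr.1.le).trans ?_
        have := pow_le_pow_left₀ hr.1.le hr.2 (2 * n - 1)
        gcongr)
    rw [sub_zero, abs_of_pos he0, mul_assoc, ← pow_succ, ← hpq, hep] at this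
    exact this
  -- second piece
  set M : ℝ → ℂ := fun r => ((2 * Real.pi / lam * r⁻¹ : ℝ) : ℂ) * a (0, 0, 0) with hM
  have h0 : (0:ℝ) ∉ Set.uIcc e R := by
    rw [Set.uIcc_of_le heR]; intro h; linarith [h.1]
  have hMi : IntervalIntegrable M volume e R := by
    apply ContinuousOn.intervalIntegrable
    intro r hr
    have : r ≠ 0 := fun h => h0 (h ▸ hr)
    apply ContinuousAt.continuousWithinAt
    simp only [hM]
    fun_prop (disch := assumption)
  have hMint : ∫ r in e..R, M r = ((2 * Real.pi / lam * (Real.log R + 1 / (2 * n) * Real.log lam) : ℝ) : ℂ) * a (0, 0, 0) := by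
    simp only [hM]
    rw [intervalIntegral.integral_mul_const, intervalIntegral.integral_ofReal,
      intervalIntegral.integral_const_mul, integral_inv h0, Real.log_div (by linarith) he0.ne', helog]
    congr 3
    ring
  have hbi : IntervalIntegrable (fun r : ℝ => (r ^ (2 * n + 1))⁻¹) volume e R := by
    apply ContinuousOn.intervalIntegrable
    intro r hr
    have : r ^ (2 * n + 1) ≠ 0 := pow_ne_zero _ (fun h => h0 (h ▸ hr))
    apply ContinuousAt.continuousWithinAt
    fun_prop (disch := assumption)
  have P2 : ‖∫ r in e..R, (G r - M r)‖ ≤ (C + 2 * Real.pi * L * R) * lam⁻¹ := by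
    have hB : IntervalIntegrable (fun r : ℝ => C * lam⁻¹ ^ 2 * (r ^ (2 * n + 1))⁻¹ + 2 * Real.pi * L * lam⁻¹) volume e R :=
      (hbi.const_mul _).add intervalIntegrable_const
    refine (intervalIntegral.norm_integral_le_of_norm_le heR (Filter.Eventually.of_forall ?_) hB).trans ?_
    · intro r hr
      have hr0 : 0 < r := he0.trans hr.1
      have hm : 0 < lam * r ^ (2 * n) := by positivity
      have h1 := hC _ hm r
      have h2 := hL (0, r, 0) (0, 0, 0)
      have h2' : ‖((0:ℝ), r, (0:ℝ)) - (0, 0, 0)‖ = r := by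
        simp [Prod.norm_def, abs_of_pos hr0, hr0.le]
      rw [h2'] at h2
      have hsplit : G r - M r = (J r - ((2 * Real.pi / (lam * r ^ (2 * n)) : ℝ) : ℂ) * a (0, r, 0)) * ((r ^ (2 * n - 1) : ℝ) : ℂ)
          + ((2 * Real.pi / lam * r⁻¹ : ℝ) : ℂ) * (a (0, r, 0) - a (0, 0, 0)) := by
        have : ((2 * Real.pi / lam * r⁻¹ : ℝ) : ℂ) = ((2 * Real.pi / (lam * r ^ (2 * n)) : ℝ) : ℂ) * ((r ^ (2 * n - 1) : ℝ) : ℂ) := by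
          rw [← Complex.ofReal_mul]
          congr 1
          conv_rhs => rw [hpq]
          rw [Nat.add_sub_cancel, pow_succ]
          field_simp
        simp only [hG, hM]
        rw [this]
        push_cast
        ring
      rw [hsplit]
      refine (norm_add_le _ _).trans ?_
      rw [norm_mul, norm_mul, Complex.norm_real, Complex.norm_real,
        Real.norm_of_nonneg (by positivity), Real.norm_of_nonneg (by positivity)]
      have e1 : C / (lam * r ^ (2 * n)) ^ 2 * r ^ (2 * n - 1) = C * lam⁻¹ ^ 2 * (r ^ (2 * n + 1))⁻¹ := by
        conv_lhs => rw [hpq]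
        conv_rhs => rw [hpq]
        rw [Nat.add_sub_cancel, pow_succ, pow_succ, pow_succ]
        field_simp
        ring
      have e2 : 2 * Real.pi / lam * r⁻¹ * (L * r) = 2 * Real.pi * L * lam⁻¹ := by
        field_simp
      rw [← e1, ← e2]
      gcongr
    · rw [intervalIntegral.integral_add (hbi.const_mul _) intervalIntegrable_const,
        intervalIntegral.integral_const_mul, intervalIntegral.integral_const, smul_eq_mul]
      have h1 := inv_pow_int (2 * n) (by omega) e R he0 heR
      rw [hep, inv_inv] at h1
      have h2 : C * lam⁻¹ ^ 2 * ∫ r in e..R, (r ^ (2 * n + 1))⁻¹ ≤ C * lam⁻¹ := by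
        calc _ ≤ C * lam⁻¹ ^ 2 * lam := by gcongr
          _ = _ := by field_simp
      have h3 : (R - e) * (2 * Real.pi * L * lam⁻¹) ≤ R * (2 * Real.pi * L * lam⁻¹) := by
        have := Real.pi_pos
        gcongr
        linarith
      linarith
  rw [intervalIntegral.integral_sub (hint e R he0.le heR) hMi] at P2
  rw [hGR, ← intervalIntegral.integral_add_adjacent_intervals (hint 0 e le_rfl he0.le) (hint e R he0.le heR)]
  have hfin : (∫ r in (0:ℝ)..e, G r) + (∫ r in e..R, G r) - ((Real.pi / (n : ℝ) * lam⁻¹ * Real.log lam : ℝ) : ℂ) * a (0, 0, 0)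
      = (∫ r in (0:ℝ)..e, G r) + ((∫ r in e..R, G r) - ∫ r in e..R, M r)
        + ((2 * Real.pi * Real.log R * lam⁻¹ : ℝ) : ℂ) * a (0, 0, 0) := by
    rw [hMint]
    have : (2 * Real.pi / lam * (Real.log R + 1 / (2 * n) * Real.log lam) : ℝ)
      = 2 * Real.pi * Real.log R * lam⁻¹ + Real.pi / (n : ℝ) * lam⁻¹ * Real.log lam := by
      field_simp
    rw [this]
    push_cast
    ring
  rw [hfin]
  refine (norm_add₃_le).trans ?_
  have P3 : ‖((2 * Real.pi * Real.log R * lam⁻¹ : ℝ) : ℂ) * a (0, 0, 0)‖ = 2 * Real.pi * Real.log R * lam⁻¹ * ‖a (0, 0, 0)‖ := by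
    rw [norm_mul, Complex.norm_real, Real.norm_of_nonneg]
    have := Real.log_nonneg hR1
    have := Real.pi_pos
    positivity
  rw [P3]
  linarith
end

section
/- Let k ≥ 1 be an integer, let a : ℝ³ → ℂ be smooth and compactly supported, let λ > 0 and let 0 < c < 1/k. For a complex number z with 0 < Re z < 1/k define M(z) = ∫₀^∞ ∫_{{(t,v) ∈ ℝ² : t v > 0}} (t v rᵏ)^{−z} a(t,r,v) dt dv dr (an absolutely convergent integral). Then ∫₀^∞ ∫_{{(t,v) ∈ ℝ² : t v > 0}} e^{iλ t v rᵏ} a(t,r,v) dt dv dr = (1/2π) ∫_ℝ e^{iπ(c+is)/2} Γ(c+is) λ^{−(c+is)} M(c+is) ds, where the right-hand integral over s ∈ ℝ converges absolutely. -/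
open MeasureTheory

lemma aux_meas (z : ℂ) : Measurable (fun t : ℝ => (t : ℂ) ^ z) := by
  exact Complex.measurable_ofReal.pow_const z

lemma aux_norm_int {z w : ℂ} {t : ℝ} (ht : 0 < t) :
    ‖(t : ℂ) ^ (z - 1) * Complex.exp (-(w * t))‖ = t ^ (z.re - 1) * Real.exp (-(w.re * t)) := by
  rw [norm_mul, Complex.norm_cpow_eq_rpow_re_of_pos ht, Complex.norm_exp]
  simp

lemma aux_real_integrable {c r : ℝ} (hc : 0 < c) (hr : 0 < r) :
    IntegrableOn (fun t : ℝ => t ^ (c - 1) * Real.exp (-(r * t))) (Set.Ioi 0) := by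
  apply Integrable.of_integral_ne_zero
  rw [Real.integral_rpow_mul_exp_neg_mul_Ioi hc hr]
  have := Real.Gamma_pos_of_pos hc
  positivity

lemma aux_int {z w : ℂ} (hz : 0 < z.re) (hw : 0 < w.re) :
    IntegrableOn (fun t : ℝ => (t : ℂ) ^ (z - 1) * Complex.exp (-(w * t))) (Set.Ioi 0) := by
  refine Integrable.mono' (aux_real_integrable hz hw) ?_ ?_
  · exact ((aux_meas _).mul (by fun_prop)).aestronglyMeasurable
  · exact (ae_restrict_mem measurableSet_Ioi).mono fun t ht => (aux_norm_int ht).le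

lemma aux_gamma_cont {z w : ℂ} (hz : 0 < z.re) (hw : 0 < w.re) :
    ∫ t : ℝ in Set.Ioi 0, (t : ℂ) ^ (z - 1) * Complex.exp (-(w * t)) =
      (1 / w) ^ z * Complex.Gamma z := by
  let U : Set ℂ := {w | 0 < w.re}
  have hUo : IsOpen U := isOpen_lt continuous_const Complex.continuous_re
  have hUc : Convex ℝ U := convex_halfSpace_re_gt 0
  have h1 : DifferentiableOn ℂ
      (fun w : ℂ => ∫ t : ℝ in Set.Ioi 0, (t : ℂ) ^ (z - 1) * Complex.exp (-(w * t))) U := by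
    intro w hw
    have hw' : 0 < w.re := hw
    refine DifferentiableAt.differentiableWithinAt ?_
    refine (hasDerivAt_integral_of_dominated_loc_of_deriv_le
      (μ := volume.restrict (Set.Ioi (0:ℝ)))
      (F := fun (w : ℂ) (t : ℝ) => (t : ℂ) ^ (z - 1) * Complex.exp (-(w * t)))
      (F' := fun w t => (t : ℂ) ^ (z - 1) * (Complex.exp (-(w * t)) * (-t)))
      (bound := fun t => t ^ ((z.re + 1) - 1) * Real.exp (-(w.re / 2 * t)))
      (s := {u : ℂ | w.re / 2 < u.re}) ?_ ?_ (aux_int hz hw) ?_ ?_ ?_ ?_).2.differentiableAt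
    · exact (isOpen_lt continuous_const Complex.continuous_re).mem_nhds (by simp; linarith)
    · exact Filter.Eventually.of_forall fun w =>
        ((aux_meas _).mul (by fun_prop)).aestronglyMeasurable
    · exact ((aux_meas _).mul (by fun_prop)).aestronglyMeasurable
    · refine (ae_restrict_mem measurableSet_Ioi).mono fun t ht u hu => ?_
      have ht : 0 < t := ht
      have hu : w.re / 2 < u.re := hu
      rw [← mul_assoc, norm_mul, aux_norm_int ht]
      have : ‖(-t : ℂ)‖ = t := by simp [abs_of_pos ht]
      rw [this, show z.re + 1 - 1 = (z.re - 1) + 1 by ring, Real.rpow_add_one ht.ne']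
      have : Real.exp (-(u.re * t)) ≤ Real.exp (-(w.re / 2 * t)) := by
        apply Real.exp_le_exp.2; nlinarith
      calc _ = t ^ (z.re - 1) * t * Real.exp (-(u.re * t)) := by ring
        _ ≤ _ := by gcongr
    · exact aux_real_integrable (by linarith) (by linarith)
    · refine Filter.Eventually.of_forall fun t u _ => ?_
      have : HasDerivAt (fun u : ℂ => -(u * t)) (-t : ℂ) u := by
        have h := ((hasDerivAt_id u).mul_const (t : ℂ)).neg
        rw [one_mul] at h
        exact h
      exact this.cexp.const_mul _
  have h2 : DifferentiableOn ℂ (fun w : ℂ => (1 / w) ^ z * Complex.Gamma z) U := by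
    intro w hw
    have hw' : 0 < w.re := hw
    have hw0 : w ≠ 0 := by rintro rfl; simp at hw'
    refine DifferentiableAt.differentiableWithinAt ?_
    refine (DifferentiableAt.cpow ?_ (differentiableAt_const _) ?_).mul_const _
    · exact (differentiableAt_const _).div differentiableAt_id hw0
    · left
      simp only [one_div, Complex.inv_re]
      exact div_pos hw' (Complex.normSq_pos.2 hw0)
  have := (h1.analyticOnNhd hUo).eqOn_of_preconnected_of_frequently_eq (h2.analyticOnNhd hUo)
    hUc.isPreconnected (z₀ := 1) (by simp [U]) ?_
  · exact this hw
  · have ht : Filter.Tendsto (fun x : ℝ => (x : ℂ)) (nhdsWithin 1 {1}ᶜ) (nhdsWithin 1 {1}ᶜ) := by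
      apply tendsto_nhdsWithin_of_tendsto_nhds_of_eventually_within
      · have := (Complex.continuous_ofReal.tendsto 1).mono_left
          (nhdsWithin_le_nhds (s := ({1}ᶜ : Set ℝ)))
        simpa using this
      · filter_upwards [self_mem_nhdsWithin] with x hx
        simpa using hx
    apply ht.frequently
    apply Filter.Eventually.frequently
    have : Set.Ioi (0:ℝ) ∈ nhdsWithin (1:ℝ) {1}ᶜ := mem_nhdsWithin_of_mem_nhds (Ioi_mem_nhds one_pos)
    filter_upwards [this] with x hx
    exact Complex.integral_cpow_mul_exp_neg_mul_Ioi hz hx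

/-- the rotation factor -/
lemma aux_rot {θ : ℝ} (h1 : -(Real.pi / 2) < θ) (h2 : θ < Real.pi / 2) (z : ℂ) :
    (1 / Complex.exp (-(θ * Complex.I))) ^ z = Complex.exp (θ * Complex.I * z) := by
  rw [one_div, ← Complex.exp_neg, neg_neg, Complex.cpow_def_of_ne_zero (Complex.exp_ne_zero _),
    Complex.log_exp]
  · simp; linarith [Real.pi_pos]
  · simp; linarith [Real.pi_pos]

lemma aux_re (θ : ℝ) : (Complex.exp (-(θ * Complex.I))).re = Real.cos θ := by
  rw [← neg_mul, ← Complex.ofReal_neg, Complex.exp_ofReal_mul_I_re, Real.cos_neg]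

lemma aux_norm_rot (θ c s : ℝ) :
    ‖Complex.exp (θ * Complex.I * (c + s * Complex.I))‖ = Real.exp (-(θ * s)) := by
  rw [Complex.norm_exp]; simp

lemma aux_gamma_bound {c θ : ℝ} (hc : 0 < c) (h1 : -(Real.pi / 2) < θ) (h2 : θ < Real.pi / 2)
    (s : ℝ) :
    Real.exp (-(θ * s)) * ‖Complex.Gamma (c + s * Complex.I)‖ ≤
      (1 / Real.cos θ) ^ c * Real.Gamma c := by
  have hcos : 0 < Real.cos θ := Real.cos_pos_of_mem_Ioo ⟨h1, h2⟩
  have hre : ((c : ℂ) + s * Complex.I).re = c := by simp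
  have hz : 0 < ((c : ℂ) + s * Complex.I).re := by rw [hre]; exact hc
  rw [← aux_norm_rot, ← norm_mul, ← aux_rot h1 h2, ← aux_gamma_cont hz (by rw [aux_re]; exact hcos),
    ← Real.integral_rpow_mul_exp_neg_mul_Ioi hc hcos]
  refine (norm_integral_le_integral_norm _).trans_eq ?_
  refine setIntegral_congr_fun measurableSet_Ioi fun t ht => ?_
  rw [aux_norm_int ht, aux_re, hre]

lemma aux_gamma_unif {c : ℝ} (hc : 0 < c) : ∃ C : ℝ, 0 ≤ C ∧ ∀ θ s : ℝ, 0 ≤ θ → θ ≤ Real.pi / 2 →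
    Real.exp (-(θ * s)) * ‖Complex.Gamma (c + s * Complex.I)‖ ≤ C * (1 + ‖s‖) ^ c := by
  have hG := Real.Gamma_pos_of_pos hc
  refine ⟨Real.exp 1 * (2 ^ c * Real.Gamma c), by positivity, fun θ s h0 h1 => ?_⟩
  have hpi := Real.pi_gt_three
  have hpi4 := Real.pi_le_four
  have e1 : (1:ℝ) ≤ Real.exp 1 := Real.one_le_exp (by norm_num)
  set S := 1 + ‖s‖ with hS
  have hS1 : 1 ≤ S := by simp [hS]
  have key : (1:ℝ) ≤ (2 * S) ^ c := Real.one_le_rpow (by linarith) hc.le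
  rcases le_total 0 s with hs | hs
  · have h := aux_gamma_bound hc (θ := 0) (by linarith) (by linarith) s
    simp only [zero_mul, neg_zero, Real.exp_zero, one_mul, Real.cos_zero, div_one,
      Real.one_rpow] at h
    have h3 : Real.exp (-(θ * s)) ≤ 1 := Real.exp_le_one_iff.2 (by nlinarith)
    calc _ ≤ 1 * Real.Gamma c := by gcongr
      _ ≤ Real.exp 1 * ((2 * S) ^ c * Real.Gamma c) := by
        gcongr
        nlinarith
      _ = _ := by rw [Real.mul_rpow (by norm_num) (by linarith)]; ring
  · have hu : 0 < 1 / S := by positivity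
    have hu1 : 1 / S ≤ 1 := by rw [div_le_one (by linarith)]; exact hS1
    have h := aux_gamma_bound hc (θ := Real.pi / 2 - 1 / S) (by linarith) (by linarith) s
    rw [Real.cos_pi_div_two_sub] at h
    have hsin : 1 / (2 * S) ≤ Real.sin (1 / S) := by
      have := Real.mul_le_sin hu.le (by linarith)
      refine le_trans ?_ this
      have : 1 / 2 ≤ 2 / Real.pi := by rw [div_le_div_iff₀ (by norm_num) (by linarith)]; linarith
      calc _ = 1 / 2 * (1 / S) := by field_simp
        _ ≤ _ := by gcongr
    have hsin0 : 0 < Real.sin (1 / S) := lt_of_lt_of_le (by positivity) hsin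
    have h4 : 1 / Real.sin (1 / S) ≤ 2 * S := by
      rw [div_le_iff₀ hsin0]
      rw [div_le_iff₀ (by positivity)] at hsin
      linarith
    have h5 : Real.exp (-(θ * s)) ≤ Real.exp 1 * Real.exp (-((Real.pi / 2 - 1 / S) * s)) := by
      rw [← Real.exp_add]
      apply Real.exp_le_exp.2
      have hns : S = 1 - s := by rw [hS, Real.norm_eq_abs, abs_of_nonpos hs]; ring
      have : 1 / S * (-s) ≤ 1 := by
        rw [div_mul_eq_mul_div, div_le_one (by linarith)]; linarith
      nlinarith
    calc _ ≤ Real.exp 1 * Real.exp (-((Real.pi / 2 - 1 / S) * s)) * ‖Complex.Gamma (c + s * Complex.I)‖ := by gcongr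
      _ = Real.exp 1 * (Real.exp (-((Real.pi / 2 - 1 / S) * s)) * ‖Complex.Gamma (c + s * Complex.I)‖) := by ring
      _ ≤ Real.exp 1 * ((1 / Real.sin (1 / S)) ^ c * Real.Gamma c) := by gcongr
      _ ≤ Real.exp 1 * ((2 * S) ^ c * Real.Gamma c) := by gcongr
      _ = _ := by rw [Real.mul_rpow (by norm_num) (by linarith)]; ring

lemma aux_gamma_meas {c : ℝ} (hc : 0 < c) :
    Continuous (fun s : ℝ => Complex.Gamma (c + s * Complex.I)) := by
  rw [continuous_iff_continuousAt]
  intro s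
  have : ContinuousAt Complex.Gamma ((c:ℂ) + s * Complex.I) := by
    apply (Complex.differentiableAt_Gamma _ _).continuousAt
    intro m h
    have := congrArg Complex.re h
    simp at this
    have hm : (0:ℝ) ≤ m := by positivity
    linarith
  exact ContinuousAt.comp (f := fun s : ℝ => (c:ℂ) + s * Complex.I) this (by fun_prop)

lemma aux_exp_abs {d : ℝ} (hd : 0 < d) : Integrable (fun s : ℝ => Real.exp (-(d * |s|))) := by
  have h1 : IntegrableOn (fun s : ℝ => Real.exp (-(d * |s|))) (Set.Ioi 0) := by
    refine (exp_neg_integrableOn_Ioi 0 hd).congr_fun (fun x hx => ?_) measurableSet_Ioi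
    have hx : 0 < x := hx
    simp [abs_of_pos hx]
  have h2 : IntegrableOn (fun s : ℝ => Real.exp (-(d * |s|))) (Set.Iic 0) := by
    have := h1.comp_neg
    simp only [abs_neg] at this
    rw [integrableOn_Iic_iff_integrableOn_Iio]
    simpa using this
  rw [← integrableOn_univ, ← Set.Iic_union_Ioi (a := (0:ℝ))]
  exact h2.union h1

lemma aux_vert {c θ : ℝ} (hc : 0 < c) (h0 : 0 < θ) (h2 : θ < Real.pi / 2) :
    Integrable (fun s : ℝ => Complex.exp (θ * Complex.I * (c + s * Complex.I)) *
      Complex.Gamma (c + s * Complex.I)) := by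
  have hpi := Real.pi_gt_three
  set θ' := (θ + Real.pi / 2) / 2 with hθ'
  set d := min θ (θ' - θ) with hd
  have hd0 : 0 < d := lt_min h0 (by rw [hθ']; linarith)
  have hG := Real.Gamma_pos_of_pos hc
  set C := (1 / Real.cos 0) ^ c * Real.Gamma c + (1 / Real.cos θ') ^ c * Real.Gamma c with hC
  have hcos : 0 < Real.cos θ' := Real.cos_pos_of_mem_Ioo ⟨by linarith, by linarith⟩
  refine Integrable.mono' ((aux_exp_abs hd0).const_mul C) ?_ (Filter.Eventually.of_forall fun s => ?_)
  · have := aux_gamma_meas hc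
    exact Continuous.aestronglyMeasurable (by fun_prop)
  · rw [norm_mul, aux_norm_rot]
    have p1 : 0 ≤ (1 / Real.cos 0) ^ c * Real.Gamma c := by simp; exact hG.le
    have p2 : 0 ≤ (1 / Real.cos θ') ^ c * Real.Gamma c := by positivity
    rcases le_total 0 s with hs | hs
    · have h := aux_gamma_bound hc (θ := 0) (by linarith) (by linarith) s
      simp only [zero_mul, neg_zero, Real.exp_zero, one_mul] at h
      rw [abs_of_nonneg hs, mul_comm]
      gcongr
      · linarith
      · exact min_le_left _ _
    · have h := aux_gamma_bound hc (θ := θ') (by linarith) (by linarith) s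
      have : Real.exp (-(θ * s)) = Real.exp (-(θ' * s)) * Real.exp (-((θ' - θ) * (-s))) := by
        rw [← Real.exp_add]; congr 1; ring
      rw [abs_of_nonpos hs, this, mul_right_comm]
      have hs' : 0 ≤ -s := by linarith
      gcongr
      · linarith
      · exact min_le_right _ _

lemma aux_inv {c θ x : ℝ} (hc : 0 < c) (h0 : 0 < θ) (h2 : θ < Real.pi / 2) (hx : 0 < x) :
    Complex.exp (-(Complex.exp (-(θ * Complex.I)) * x)) = (1 / (2 * (Real.pi : ℂ))) *
      ∫ s : ℝ, (x : ℂ) ^ (-((c:ℂ) + s * Complex.I)) * (Complex.exp (θ * Complex.I * (c + s * Complex.I)) *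
      Complex.Gamma (c + s * Complex.I)) := by
  have hcos : 0 < Real.cos θ := Real.cos_pos_of_mem_Ioo ⟨by linarith, h2⟩
  set f : ℝ → ℂ := fun t => Complex.exp (-(Complex.exp (-(θ * Complex.I)) * t)) with hf
  have hm : ∀ s : ℝ, mellin f (c + s * Complex.I) =
      Complex.exp (θ * Complex.I * (c + s * Complex.I)) * Complex.Gamma (c + s * Complex.I) := by
    intro s
    rw [← aux_rot (by linarith) h2, ← aux_gamma_cont (by simpa using hc) (by rw [aux_re]; exact hcos)]
    rfl
  have := mellinInv_mellin_eq c f hx (aux_int (by simpa using hc) (by rw [aux_re]; exact hcos)) ?_ ?_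
  · rw [mellinInv] at this
    simp only [hm] at this
    refine (show _ = f x from rfl).trans ?_
    rw [← this]
    simp
  · rw [Complex.VerticalIntegrable]
    simp only [hm]
    exact aux_vert hc h0 h2
  · exact Continuous.continuousAt (by fun_prop)

lemma aux_abs {Ω : Type*} [MeasurableSpace Ω] (μ : Measure Ω) [SFinite μ] (X : Ω → ℝ)
    (hX : Measurable X) (hpos : ∀ᵐ ω ∂μ, 0 < X ω) (A : Ω → ℂ) (hA : Integrable A μ) {c : ℝ}
    (hc0 : 0 < c) (hc1 : c < 1) (hXA : Integrable (fun ω => (X ω) ^ (-c) * ‖A ω‖) μ) (C : ℝ)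
    (N : ℝ → ℂ) (hNdef : ∀ s : ℝ, N s = ∫ ω, (X ω : ℂ) ^ (-((c:ℂ) + s * Complex.I)) * A ω ∂μ)
    (hN : ∀ s : ℝ, ‖N s‖ ≤ C * (1 + ‖s‖) ^ (-2 : ℝ)) :
    Integrable (fun s : ℝ => Complex.exp (((Real.pi / 2 : ℝ) : ℂ) * Complex.I * (c + s * Complex.I)) *
      Complex.Gamma (c + s * Complex.I) * N s) ∧
    ∫ ω, Complex.exp (Complex.I * (X ω : ℂ)) * A ω ∂μ = (1 / (2 * (Real.pi : ℂ))) *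
      ∫ s : ℝ, Complex.exp (((Real.pi / 2 : ℝ) : ℂ) * Complex.I * (c + s * Complex.I)) *
      Complex.Gamma (c + s * Complex.I) * N s := by
  have hpi := Real.pi_gt_three
  obtain ⟨D, hD0, hD⟩ := aux_gamma_unif hc0
  have hGc := aux_gamma_meas hc0
  have hjm : AEStronglyMeasurable (fun p : ℝ × Ω =>
      (X p.2 : ℂ) ^ (-((c:ℂ) + p.1 * Complex.I)) * A p.2) (volume.prod μ) := by
    refine AEStronglyMeasurable.mul ?_ hA.aestronglyMeasurable.comp_snd
    apply Measurable.aestronglyMeasurable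
    apply Measurable.pow <;> fun_prop
  have hNm : AEStronglyMeasurable N volume := by
    have := hjm.integral_prod_right'
    simp only [← hNdef] at this
    exact this
  have hdom_int : Integrable (fun s : ℝ => D * (1 + ‖s‖) ^ c * (C * (1 + ‖s‖) ^ (-2 : ℝ))) := by
    have := (integrable_one_add_norm (E := ℝ) (μ := volume) (r := 2 - c) (by simp; linarith)).const_mul (D * C)
    refine this.congr (Filter.Eventually.of_forall fun s => ?_)
    have : (0:ℝ) < 1 + ‖s‖ := by positivity
    simp only
    rw [show -(2 - c) = c + (-2) by ring, Real.rpow_add this]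
    ring
  have hdom : ∀ θ : ℝ, 0 ≤ θ → θ ≤ Real.pi / 2 → ∀ s : ℝ,
      ‖Complex.exp (θ * Complex.I * (c + s * Complex.I)) * Complex.Gamma (c + s * Complex.I) * N s‖
      ≤ D * (1 + ‖s‖) ^ c * (C * (1 + ‖s‖) ^ (-2 : ℝ)) := by
    intro θ h1 h2 s
    rw [norm_mul, norm_mul, aux_norm_rot]
    have := hD θ s h1 h2
    exact mul_le_mul this (hN s) (norm_nonneg _) (by positivity)
  have hmeas : ∀ θ : ℝ, AEStronglyMeasurable (fun s : ℝ =>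
      Complex.exp (θ * Complex.I * (c + s * Complex.I)) * Complex.Gamma (c + s * Complex.I) * N s)
      volume := by
    intro θ
    refine AEStronglyMeasurable.mul (Continuous.aestronglyMeasurable (by fun_prop)) hNm
  refine ⟨Integrable.mono' hdom_int (hmeas _) (Filter.Eventually.of_forall
    (hdom _ (by positivity) le_rfl)), ?_⟩
  -- Fubini
  have hfub : ∀ θ : ℝ, 0 < θ → θ < Real.pi / 2 →
      ∫ ω, Complex.exp (-(Complex.exp (-(θ * Complex.I)) * X ω)) * A ω ∂μ =
      (1 / (2 * (Real.pi : ℂ))) * ∫ s : ℝ, Complex.exp (θ * Complex.I * (c + s * Complex.I)) *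
        Complex.Gamma (c + s * Complex.I) * N s := by
    intro θ h0 h2
    have hi : Integrable (fun p : ℝ × Ω =>
        (Complex.exp (θ * Complex.I * (c + p.1 * Complex.I)) *
          Complex.Gamma (c + p.1 * Complex.I)) *
        ((X p.2 : ℂ) ^ (-((c:ℂ) + p.1 * Complex.I)) * A p.2)) (volume.prod μ) := by
      refine Integrable.mono' ((aux_vert hc0 h0 h2).norm.mul_prod hXA) ?_ ?_
      · refine AEStronglyMeasurable.mul ?_ hjm
        have h : Continuous (fun s : ℝ => Complex.exp (θ * Complex.I * (c + s * Complex.I)) *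
          Complex.Gamma (c + s * Complex.I)) := by fun_prop
        exact (h.measurable.comp measurable_fst).aestronglyMeasurable
      · have : ∀ᵐ p ∂((volume : Measure ℝ).prod μ), 0 < X p.2 :=
          Measure.quasiMeasurePreserving_snd.ae hpos
        filter_upwards [this] with p hp
        rw [norm_mul, norm_mul ((X p.2 : ℂ) ^ _), Complex.norm_cpow_eq_rpow_re_of_pos hp]
        simp
    have h1 : ∫ ω, Complex.exp (-(Complex.exp (-(θ * Complex.I)) * X ω)) * A ω ∂μ =
        ∫ ω, (1 / (2 * (Real.pi : ℂ))) * (∫ s : ℝ,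
          (Complex.exp (θ * Complex.I * (c + s * Complex.I)) *
          Complex.Gamma (c + s * Complex.I)) *
        ((X ω : ℂ) ^ (-((c:ℂ) + s * Complex.I)) * A ω)) ∂μ := by
      refine integral_congr_ae ?_
      filter_upwards [hpos] with ω hω
      rw [aux_inv hc0 h0 h2 hω, mul_assoc, ← integral_mul_const]
      congr 2
      ext s
      ring
    rw [h1, integral_const_mul, ← integral_integral_swap hi]
    congr 2
    ext s
    rw [integral_const_mul, hNdef]
  -- limits
  have hev : ∀ᶠ θ in nhdsWithin (Real.pi / 2) (Set.Iio (Real.pi / 2)), 0 < θ ∧ θ < Real.pi / 2 := by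
    filter_upwards [self_mem_nhdsWithin, mem_nhdsWithin_of_mem_nhds
      (Ioi_mem_nhds (show (0:ℝ) < Real.pi / 2 by positivity))] with θ h1 h2
    exact ⟨h2, h1⟩
  have hL : Filter.Tendsto (fun θ : ℝ =>
      ∫ ω, Complex.exp (-(Complex.exp (-(θ * Complex.I)) * X ω)) * A ω ∂μ)
      (nhdsWithin (Real.pi / 2) (Set.Iio (Real.pi / 2)))
      (nhds (∫ ω, Complex.exp (Complex.I * (X ω : ℂ)) * A ω ∂μ)) := by
    refine tendsto_integral_filter_of_dominated_convergence (fun ω => ‖A ω‖) ?_ ?_ hA.norm ?_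
    · refine Filter.Eventually.of_forall fun θ => ?_
      exact AEStronglyMeasurable.mul (Measurable.aestronglyMeasurable (by fun_prop))
        hA.aestronglyMeasurable
    · filter_upwards [hev] with θ hθ
      filter_upwards [hpos] with ω hω
      rw [norm_mul, Complex.norm_exp]
      have hcos : 0 < Real.cos θ := Real.cos_pos_of_mem_Ioo ⟨by linarith, hθ.2⟩
      have : (-(Complex.exp (-(θ * Complex.I)) * X ω)).re ≤ 0 := by
        rw [Complex.neg_re, Complex.re_mul_ofReal, aux_re]
        nlinarith
      have := Real.exp_le_one_iff.2 this
      nlinarith [norm_nonneg (A ω)]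
    · refine Filter.Eventually.of_forall fun ω => ?_
      have hc : Continuous (fun θ : ℝ =>
        Complex.exp (-(Complex.exp (-(θ * Complex.I)) * X ω)) * A ω) := by fun_prop
      have := (hc.tendsto (Real.pi / 2)).mono_left
        (nhdsWithin_le_nhds (s := Set.Iio (Real.pi / 2)))
      convert this using 3
      have h5 : Complex.exp (-(((Real.pi / 2 : ℝ) : ℂ) * Complex.I)) = -Complex.I := by
        rw [← Complex.exp_neg_pi_div_two_mul_I]
        congr 1
        push_cast
        ring
      rw [h5]
      congr 1
      ring
  have hR : Filter.Tendsto (fun θ : ℝ => (1 / (2 * (Real.pi : ℂ))) *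
      ∫ s : ℝ, Complex.exp (θ * Complex.I * (c + s * Complex.I)) *
        Complex.Gamma (c + s * Complex.I) * N s)
      (nhdsWithin (Real.pi / 2) (Set.Iio (Real.pi / 2)))
      (nhds ((1 / (2 * (Real.pi : ℂ))) *
      ∫ s : ℝ, Complex.exp (((Real.pi / 2 : ℝ) : ℂ) * Complex.I * (c + s * Complex.I)) *
      Complex.Gamma (c + s * Complex.I) * N s)) := by
    refine Filter.Tendsto.const_mul _ ?_
    refine tendsto_integral_filter_of_dominated_convergence _
      (Filter.Eventually.of_forall hmeas) ?_ hdom_int ?_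
    · filter_upwards [hev] with θ hθ
      exact Filter.Eventually.of_forall (hdom θ hθ.1.le hθ.2.le)
    · refine Filter.Eventually.of_forall fun s => ?_
      have hc : Continuous (fun θ : ℝ => Complex.exp (θ * Complex.I * (c + s * Complex.I)) *
        Complex.Gamma (c + s * Complex.I) * N s) := by fun_prop
      exact (hc.tendsto (Real.pi / 2)).mono_left
        (nhdsWithin_le_nhds (s := Set.Iio (Real.pi / 2)))
  refine tendsto_nhds_unique hL (hR.congr' ?_)
  filter_upwards [hev] with θ hθ
  exact (hfub θ hθ.1 hθ.2).symm

lemma aux_ibp {g g' : ℝ → ℂ} (hg : ∀ x, HasDerivAt g (g' x) x) (hg' : Continuous g')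
    (hs : HasCompactSupport g) (hs' : HasCompactSupport g') {w : ℂ} (hw : 0 < w.re) :
    ∫ x in Set.Ioi (0:ℝ), (x : ℂ) ^ (w - 1) * g x =
      -(1 / w) * ∫ x in Set.Ioi (0:ℝ), (x : ℂ) ^ w * g' x := by
  have hw0 : w ≠ 0 := by rintro rfl; simp at hw
  have hgc : Continuous g := continuous_iff_continuousAt.2 fun x => (hg x).continuousAt
  have hcp : Continuous (fun x : ℝ => (x : ℂ) ^ w) := Complex.continuous_ofReal_cpow_const hw
  have i1 : IntegrableOn (fun x : ℝ => (x : ℂ) ^ (w - 1) * g x) (Set.Ioi 0) := by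
    have h0 : g =ᶠ[Filter.atTop] 0 := by
      rw [hasCompactSupport_iff_eventuallyEq, Filter.coclosedCompact_eq_cocompact] at hs
      exact hs.filter_mono _root_.atTop_le_cocompact
    refine mellinConvergent_of_isBigO_rpow (a := w.re + 1) (b := 0) (f := g) ?_ ?_ (by linarith) ?_ hw
    · exact hgc.locallyIntegrable.locallyIntegrableOn _
    · exact h0.trans_isBigO (Asymptotics.isBigO_zero _ _)
    · simp only [neg_zero, Real.rpow_zero]
      exact ((hgc.tendsto 0).isBigO_one ℝ).mono nhdsWithin_le_nhds
  have i2 : IntegrableOn (fun x : ℝ => (x : ℂ) ^ w * g' x) (Set.Ioi 0) :=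
    ((hcp.mul hg').integrable_of_hasCompactSupport hs'.mul_left).integrableOn
  have hd : ∀ x ∈ Set.Ioi (0:ℝ), HasDerivAt (fun x : ℝ => (x : ℂ) ^ w * g x)
      (w * ((x : ℂ) ^ (w - 1) * g x) + (x : ℂ) ^ w * g' x) x := by
    intro x hx
    have hx : 0 < x := hx
    have h' : HasDerivAt (fun x : ℝ => (x : ℂ) ^ w) (w * (x : ℂ) ^ (w - 1)) x :=
      hasDerivAt_ofReal_cpow_const hx.ne' hw0
    have := h'.mul (hg x)
    rw [← mul_assoc]
    exact this
  have ht : Filter.Tendsto (fun x : ℝ => (x : ℂ) ^ w * g x) Filter.atTop (nhds 0) := by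
    have hs2 : HasCompactSupport (fun x : ℝ => (x : ℂ) ^ w * g x) := hs.mul_left
    rw [hasCompactSupport_iff_eventuallyEq, Filter.coclosedCompact_eq_cocompact] at hs2
    exact (hs2.filter_mono _root_.atTop_le_cocompact).tendsto
  have key := integral_Ioi_of_hasDerivAt_of_tendsto (a := 0)
    (hcp.mul hgc).continuousWithinAt hd ((i1.const_mul w).add i2) ht
  rw [integral_add (i1.const_mul w) i2, integral_const_mul] at key
  rw [Pi.mul_apply, Complex.ofReal_zero, Complex.zero_cpow hw0, zero_mul, sub_zero] at key
  field_simp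
  linear_combination key

lemma aux_slice {b : ℝ × ℝ × ℝ → ℂ} (hb : HasCompactSupport b) (t r : ℝ) :
    HasCompactSupport (fun v => b (t, r, v)) := by
  obtain ⟨R, hR⟩ := hb.isCompact.isBounded.subset_closedBall 0
  refine HasCompactSupport.intro (isCompact_closedBall (0:ℝ) R) fun v hv => ?_
  by_contra h
  have h1 : ((t, r, v) : ℝ × ℝ × ℝ) ∈ Metric.closedBall (0 : ℝ × ℝ × ℝ) R :=
    hR (subset_tsupport _ h)
  apply hv
  simp only [Metric.mem_closedBall, dist_zero_right] at h1 ⊢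
  exact (norm_snd_le (t, r, v).2).trans ((norm_snd_le (t, r, v)).trans h1)

lemma aux_deriv {b : ℝ × ℝ × ℝ → ℂ} (hb : ContDiff ℝ (⊤ : ℕ∞) b) (t r v : ℝ) :
    HasDerivAt (fun v => b (t, r, v)) (fderiv ℝ b (t, r, v) (0, 0, 1)) v := by
  have h1 : HasFDerivAt b (fderiv ℝ b (t, r, v)) (t, r, v) :=
    (hb.differentiable (by simp) _).hasFDerivAt
  have h2 : HasDerivAt (fun v : ℝ => ((t, r, v) : ℝ × ℝ × ℝ)) (0, 0, 1) v :=
    (hasDerivAt_const v t).prodMk ((hasDerivAt_const v r).prodMk (hasDerivAt_id v))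
  exact h1.comp_hasDerivAt v h2

lemma aux_contdiff {b : ℝ × ℝ × ℝ → ℂ} (hb : ContDiff ℝ (⊤ : ℕ∞) b) :
    ContDiff ℝ (⊤ : ℕ∞) (fun x => fderiv ℝ b x (0, 0, 1)) := by
  have : ContDiff ℝ (⊤ : ℕ∞) (fderiv ℝ b) := hb.fderiv_right (by simp)
  exact this.clm_apply contDiff_const

lemma aux_v {a : ℝ × ℝ × ℝ → ℂ} (ha : ContDiff ℝ (⊤ : ℕ∞) a) (hca : HasCompactSupport a) {c : ℝ}
    (hc0 : 0 < c) (hc1 : c < 1) :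
    ∃ K : ℝ, 0 ≤ K ∧ ∀ z : ℂ, z.re = c → ∀ t r : ℝ,
      ‖∫ v in Set.Ioi (0:ℝ), (v : ℂ) ^ (-z) * a (t, r, v)‖ ≤ K / (‖1 - z‖ * ‖2 - z‖) := by
  set a1 : ℝ × ℝ × ℝ → ℂ := fun x => fderiv ℝ a x (0, 0, 1) with ha1
  set a2 : ℝ × ℝ × ℝ → ℂ := fun x => fderiv ℝ a1 x (0, 0, 1) with ha2
  have h1 : ContDiff ℝ (⊤ : ℕ∞) a1 := aux_contdiff ha
  have h2 : ContDiff ℝ (⊤ : ℕ∞) a2 := aux_contdiff h1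
  have s1 : HasCompactSupport a1 := hca.fderiv_apply ℝ _
  have s2 : HasCompactSupport a2 := s1.fderiv_apply ℝ _
  obtain ⟨R, hR⟩ := s2.isCompact.isBounded.subset_closedBall 0
  obtain ⟨B, hB⟩ := s2.exists_bound_of_continuous h2.continuous
  have hB0 : 0 ≤ B := (norm_nonneg _).trans (hB 0)
  have hz2 : ∀ t r v : ℝ, R < v → a2 (t, r, v) = 0 := by
    intro t r v hv
    by_contra h
    have h1 : ((t, r, v) : ℝ × ℝ × ℝ) ∈ Metric.closedBall (0 : ℝ × ℝ × ℝ) R :=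
      hR (subset_tsupport _ h)
    simp only [Metric.mem_closedBall, dist_zero_right] at h1
    have := (norm_snd_le (t, r, v).2).trans ((norm_snd_le (t, r, v)).trans h1)
    have := (le_abs_self v).trans this
    linarith
  have hint : Integrable (Set.indicator (Set.Icc 0 R) (fun v : ℝ => v ^ (2 - c) * B)) := by
    rw [integrable_indicator_iff measurableSet_Icc]
    apply ContinuousOn.integrableOn_Icc
    apply Continuous.continuousOn
    have : Continuous (fun v : ℝ => v ^ (2 - c)) :=
      Real.continuous_rpow_const (by linarith)
    fun_prop
  refine ⟨∫ v, Set.indicator (Set.Icc 0 R) (fun v : ℝ => v ^ (2 - c) * B) v, ?_, ?_⟩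
  · refine integral_nonneg fun v => Set.indicator_nonneg (fun v hv => ?_) v
    exact mul_nonneg (Real.rpow_nonneg hv.1 _) hB0
  intro z hz t r
  have e1 := aux_ibp (aux_deriv ha t r) (h1.continuous.comp (by fun_prop : Continuous fun v : ℝ => ((t, r, v) : ℝ × ℝ × ℝ)))
    (aux_slice hca t r) (aux_slice s1 t r) (w := 1 - z) (by simp; linarith)
  have e2 := aux_ibp (aux_deriv h1 t r) (h2.continuous.comp (by fun_prop : Continuous fun v : ℝ => ((t, r, v) : ℝ × ℝ × ℝ)))
    (aux_slice s1 t r) (aux_slice s2 t r) (w := 2 - z) (by simp; linarith)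
  rw [show (1 - z) - 1 = -z by ring] at e1
  rw [show (2 - z) - 1 = 1 - z by ring] at e2
  rw [e1]
  rw [e2, norm_mul, norm_mul, norm_neg, norm_neg, norm_div, norm_div, norm_one, ← mul_assoc,
    one_div_mul_one_div, one_div, div_eq_inv_mul]
  gcongr
  rw [← integral_indicator measurableSet_Ioi]
  refine norm_integral_le_of_norm_le hint (Filter.Eventually.of_forall fun v => ?_)
  by_cases hv : v ∈ Set.Ioi (0:ℝ)
  · rw [Set.indicator_of_mem hv]
    have hv : 0 < v := hv
    by_cases hvR : v ≤ R
    · rw [Set.indicator_of_mem (show v ∈ Set.Icc 0 R from ⟨hv.le, hvR⟩), norm_mul, Complex.norm_cpow_eq_rpow_re_of_pos hv]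
      simp only [Complex.sub_re, Complex.re_ofNat, hz]
      gcongr
      exact hB _
    · push Not at hvR
      have := hz2 t r v hvR
      simp only [ha2] at this
      rw [this, mul_zero, norm_zero]
      refine Set.indicator_nonneg (fun v hv => ?_) v
      exact mul_nonneg (Real.rpow_nonneg hv.1 _) hB0
  · rw [Set.indicator_of_notMem hv, norm_zero]
    refine Set.indicator_nonneg (fun v hv => ?_) v
    exact mul_nonneg (Real.rpow_nonneg hv.1 _) hB0

lemma aux_h {e R : ℝ} (he : e < 1) :
    Integrable (Set.indicator (Set.Icc (-R) R) (fun t : ℝ => |t| ^ (-e))) := by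
  have h1 : IntegrableOn (Set.indicator (Set.Icc (-R) R) (fun t : ℝ => |t| ^ (-e)))
      (Set.Ioi 0) := by
    have h := (intervalIntegral.intervalIntegrable_rpow' (a := 0) (b := |R|) (r := -e)
      (by linarith)).1
    have h' : Integrable (Set.indicator (Set.Ioc 0 |R|) (fun t : ℝ => t ^ (-e))) := by
      rwa [integrable_indicator_iff measurableSet_Ioc]
    refine Integrable.mono' h'.integrableOn ?_ ?_
    · refine Measurable.aestronglyMeasurable ?_
      exact Measurable.indicator (by fun_prop) measurableSet_Icc
    · refine (ae_restrict_mem measurableSet_Ioi).mono fun t ht => ?_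
      have ht : 0 < t := ht
      by_cases h : t ∈ Set.Icc (-R) R
      · rw [Set.indicator_of_mem h, Set.indicator_of_mem (show t ∈ Set.Ioc 0 |R| from ⟨ht, h.2.trans (le_abs_self R)⟩),
          abs_of_pos ht, Real.norm_of_nonneg (by positivity)]
      · rw [Set.indicator_of_notMem h, norm_zero]
        exact Set.indicator_nonneg (fun v hv => Real.rpow_nonneg hv.1.le _) t
  have h2 : IntegrableOn (Set.indicator (Set.Icc (-R) R) (fun t : ℝ => |t| ^ (-e)))
      (Set.Iic 0) := by
    have := h1.comp_neg
    rw [integrableOn_Iic_iff_integrableOn_Iio]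
    simp only [Set.neg_Ioi, neg_zero] at this
    refine this.congr_fun (fun t _ => ?_) measurableSet_Iio
    beta_reduce
    by_cases h : t ∈ Set.Icc (-R) R
    · have h' : -t ∈ Set.Icc (-R) R := ⟨by linarith [h.2], by linarith [h.1]⟩
      rw [Set.indicator_of_mem h, Set.indicator_of_mem h', abs_neg]
    · have h' : -t ∉ Set.Icc (-R) R := fun h' => h ⟨by linarith [h'.2], by linarith [h'.1]⟩
      rw [Set.indicator_of_notMem h, Set.indicator_of_notMem h']
  rw [← integrableOn_univ, ← Set.Iic_union_Ioi (a := (0:ℝ))]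
  exact h2.union h1

lemma aux_S : MeasurableSet {p : ℝ × ℝ | 0 < p.1 * p.2} :=
  measurableSet_lt measurable_const (by fun_prop)

lemma aux_Xnorm {lam t v r e : ℝ} (k : ℕ) (hlam : 0 < lam) (hr : 0 < r) (h : 0 < t * v) :
    (lam * t * v * r ^ k) ^ (-e) = lam ^ (-e) * (|r| ^ (-(k * e)) * (|t| ^ (-e) * |v| ^ (-e))) := by
  rw [mul_assoc lam, ← abs_of_pos h, abs_mul, Real.mul_rpow (by positivity) (by positivity),
    Real.mul_rpow (by positivity) (by positivity), Real.mul_rpow (by positivity) (by positivity),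
    abs_of_pos hr, show -(k * e) = (k:ℝ) * (-e) by ring, Real.rpow_mul hr.le, Real.rpow_natCast]
  ring

lemma aux_zero {a : ℝ × ℝ × ℝ → ℂ} {R : ℝ} (hR : tsupport a ⊆ Metric.closedBall 0 R) {t r v : ℝ}
    (h : a (t, r, v) ≠ 0) : t ∈ Set.Icc (-R) R ∧ r ∈ Set.Icc (-R) R ∧ v ∈ Set.Icc (-R) R := by
  have h1 : ((t, r, v) : ℝ × ℝ × ℝ) ∈ Metric.closedBall (0 : ℝ × ℝ × ℝ) R :=
    hR (subset_tsupport _ h)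
  simp only [Metric.mem_closedBall, dist_zero_right] at h1
  have e1 := (norm_fst_le (t, r, v)).trans h1
  have e2 := (norm_fst_le (t, r, v).2).trans ((norm_snd_le (t, r, v)).trans h1)
  have e3 := (norm_snd_le (t, r, v).2).trans ((norm_snd_le (t, r, v)).trans h1)
  exact ⟨abs_le.1 e1, abs_le.1 e2, abs_le.1 e3⟩

lemma aux_mem_ae : ∀ᵐ x ∂((volume.restrict (Set.Ioi (0:ℝ))).prod
      ((volume : Measure (ℝ × ℝ)).restrict {p : ℝ × ℝ | 0 < p.1 * p.2})),
      0 < x.1 ∧ 0 < x.2.1 * x.2.2 := by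
  have h1 : ∀ᵐ x ∂((volume.restrict (Set.Ioi (0:ℝ))).prod
      ((volume : Measure (ℝ × ℝ)).restrict {p : ℝ × ℝ | 0 < p.1 * p.2})), 0 < x.1 :=
    Measure.quasiMeasurePreserving_fst.ae (ae_restrict_mem measurableSet_Ioi)
  have h2 : ∀ᵐ x ∂((volume.restrict (Set.Ioi (0:ℝ))).prod
      ((volume : Measure (ℝ × ℝ)).restrict {p : ℝ × ℝ | 0 < p.1 * p.2})), 0 < x.2.1 * x.2.2 :=
    Measure.quasiMeasurePreserving_snd.ae (p := fun p : ℝ × ℝ => 0 < p.1 * p.2)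
      (ae_restrict_mem aux_S)
  filter_upwards [h1, h2] with x a b using ⟨a, b⟩

lemma aux_XA {a : ℝ × ℝ × ℝ → ℂ} (ha : Continuous a) (hca : HasCompactSupport a)
    {k : ℕ} {lam e : ℝ} (hlam : 0 < lam) (he : e < 1) (hke : k * e < 1) :
    Integrable (fun x : ℝ × ℝ × ℝ => (lam * x.2.1 * x.2.2 * x.1 ^ k) ^ (-e) *
      ‖a (x.2.1, x.1, x.2.2)‖) ((volume.restrict (Set.Ioi (0:ℝ))).prod
      ((volume : Measure (ℝ × ℝ)).restrict {p : ℝ × ℝ | 0 < p.1 * p.2})) := by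
  obtain ⟨R, hR⟩ := hca.isCompact.isBounded.subset_closedBall 0
  obtain ⟨B, hB⟩ := hca.exists_bound_of_continuous ha
  have hB0 : 0 ≤ B := (norm_nonneg _).trans (hB 0)
  have hi := ((aux_h (R := R) hke).integrableOn (s := Set.Ioi 0)).mul_prod
    (((aux_h (R := R) he).mul_prod (aux_h (R := R) he)).integrableOn
      (s := {p : ℝ × ℝ | 0 < p.1 * p.2}))
  refine Integrable.mono' (hi.const_mul (lam ^ (-e) * B)) ?_ ?_
  · apply AEStronglyMeasurable.mul
    · exact Measurable.aestronglyMeasurable (by fun_prop)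
    · exact Continuous.aestronglyMeasurable (by fun_prop)
  · filter_upwards [aux_mem_ae] with x hx
    obtain ⟨r, t, v⟩ := x
    simp only at hx ⊢
    by_cases h : a (t, r, v) = 0
    · rw [h, norm_zero, mul_zero, norm_zero]
      have : ∀ (e' y : ℝ), 0 ≤ Set.indicator (Set.Icc (-R) R) (fun t : ℝ => |t| ^ (-e')) y :=
        fun e' y => Set.indicator_nonneg (fun v hv => Real.rpow_nonneg (abs_nonneg _) _) y
      have h1 := this e t
      have h2 := this e v
      have h3 := this (k * e) r
      positivity
    · obtain ⟨m1, m2, m3⟩ := aux_zero hR h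
      rw [Set.indicator_of_mem m1, Set.indicator_of_mem m2, Set.indicator_of_mem m3, norm_mul,
        norm_norm, aux_Xnorm k hlam hx.1 hx.2, Real.norm_of_nonneg (by positivity)]
      calc _ ≤ lam ^ (-e) * (|r| ^ (-(k * e)) * (|t| ^ (-e) * |v| ^ (-e))) * B := by
            gcongr; exact hB _
        _ = _ := by ring

lemma aux_inner {a : ℝ × ℝ × ℝ → ℂ} (k : ℕ) {lam : ℝ} (hlam : 0 < lam) {c K Q R : ℝ} {z : ℂ}
    (hz : z.re = c) (hR : tsupport a ⊆ Metric.closedBall 0 R)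
    (hK1 : ∀ t r : ℝ, ‖∫ v in Set.Ioi (0:ℝ), (v : ℂ) ^ (-z) * a (t, r, v)‖ ≤ Q)
    (hK2 : ∀ t r : ℝ, ‖∫ v in Set.Ioi (0:ℝ), (v : ℂ) ^ (-z) * a (t, r, -v)‖ ≤ Q)
    {t r : ℝ} (ht : t ≠ 0) (hr : 0 < r) :
    ‖∫ v : ℝ, Set.indicator {p : ℝ × ℝ | 0 < p.1 * p.2} (fun p : ℝ × ℝ =>
      ((lam * p.1 * p.2 * r ^ k : ℝ) : ℂ) ^ (-z) * a (p.1, r, p.2)) (t, v)‖ ≤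
    lam ^ (-c) * Q * (Set.indicator (Set.Icc (-R) R) (fun t : ℝ => |t| ^ (-(k * c))) r *
      Set.indicator (Set.Icc (-R) R) (fun t : ℝ => |t| ^ (-c)) t) := by
  have hQ : 0 ≤ Q := (norm_nonneg _).trans (hK1 0 0)
  by_cases hm : t ∈ Set.Icc (-R) R ∧ r ∈ Set.Icc (-R) R
  swap
  · have h0 : ∀ v, a (t, r, v) = 0 := by
      intro v
      by_contra h
      have := aux_zero hR h
      exact hm ⟨this.1, this.2.1⟩
    have h1 : ∀ v, Set.indicator {p : ℝ × ℝ | 0 < p.1 * p.2} (fun p : ℝ × ℝ =>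
      ((lam * p.1 * p.2 * r ^ k : ℝ) : ℂ) ^ (-z) * a (p.1, r, p.2)) (t, v) = 0 := by
      intro v
      apply Set.indicator_apply_eq_zero.2
      intro _
      simp only [h0, mul_zero]
    simp only [h1, integral_zero, norm_zero]
    have : ∀ (e' y : ℝ), 0 ≤ Set.indicator (Set.Icc (-R) R) (fun t : ℝ => |t| ^ (-e')) y :=
      fun e' y => Set.indicator_nonneg (fun v hv => Real.rpow_nonneg (abs_nonneg _) _) y
    have h2 := this c t
    have h3 := this (k * c) r
    positivity
  rw [Set.indicator_of_mem hm.1, Set.indicator_of_mem hm.2]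
  have hn : ‖((lam * |t| * r ^ k : ℝ) : ℂ) ^ (-z)‖ = lam ^ (-c) * (|r| ^ (-(k * c)) * |t| ^ (-c)) := by
    have hp : 0 < |t| := abs_pos.2 ht
    rw [Complex.norm_cpow_eq_rpow_re_of_pos (by positivity), Complex.neg_re, hz]
    have := aux_Xnorm (e := c) (t := |t|) (v := 1) k hlam hr (by simpa using hp)
    simpa using this
  rcases lt_or_gt_of_ne ht with htn | htp
  · have e : ∀ v, Set.indicator {p : ℝ × ℝ | 0 < p.1 * p.2} (fun p : ℝ × ℝ =>
      ((lam * p.1 * p.2 * r ^ k : ℝ) : ℂ) ^ (-z) * a (p.1, r, p.2)) (t, v) =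
      Set.indicator (Set.Iio 0) (fun v : ℝ => ((lam * |t| * r ^ k : ℝ) : ℂ) ^ (-z) *
        (((-v : ℝ) : ℂ) ^ (-z) * a (t, r, v))) v := by
      intro v
      by_cases hv : v < 0
      · rw [Set.indicator_of_mem (show (t, v) ∈ {p : ℝ × ℝ | 0 < p.1 * p.2} from
          mul_pos_of_neg_of_neg htn hv), Set.indicator_of_mem (show v ∈ Set.Iio 0 from hv),
          ← mul_assoc, ← Complex.mul_cpow_ofReal_nonneg (by positivity) (by linarith),
          ← Complex.ofReal_mul, abs_of_neg htn]
        congr 3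
        ring_nf
      · rw [Set.indicator_of_notMem, Set.indicator_of_notMem]
        · exact hv
        · intro h
          have h : 0 < t * v := h
          push Not at hv
          nlinarith
    simp only [e]
    rw [integral_indicator measurableSet_Iio, integral_const_mul, norm_mul, hn,
      ← integral_Iic_eq_integral_Iio]
    have e2 : ∫ v in Set.Iic (0:ℝ), ((-v : ℝ) : ℂ) ^ (-z) * a (t, r, v) =
        ∫ v in Set.Ioi (0:ℝ), (v : ℂ) ^ (-z) * a (t, r, -v) := by
      have := integral_comp_neg_Iic 0 (fun v : ℝ => (v : ℂ) ^ (-z) * a (t, r, -v))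
      simpa using this
    rw [e2]
    calc _ ≤ lam ^ (-c) * (|r| ^ (-(k * c)) * |t| ^ (-c)) * Q := by gcongr; exact hK2 t r
      _ = _ := by ring
  · have e : ∀ v, Set.indicator {p : ℝ × ℝ | 0 < p.1 * p.2} (fun p : ℝ × ℝ =>
      ((lam * p.1 * p.2 * r ^ k : ℝ) : ℂ) ^ (-z) * a (p.1, r, p.2)) (t, v) =
      Set.indicator (Set.Ioi 0) (fun v : ℝ => ((lam * |t| * r ^ k : ℝ) : ℂ) ^ (-z) *
        ((v : ℂ) ^ (-z) * a (t, r, v))) v := by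
      intro v
      by_cases hv : 0 < v
      · rw [Set.indicator_of_mem (show (t, v) ∈ {p : ℝ × ℝ | 0 < p.1 * p.2} from
          mul_pos htp hv), Set.indicator_of_mem (show v ∈ Set.Ioi 0 from hv),
          ← mul_assoc, ← Complex.mul_cpow_ofReal_nonneg (by positivity) (by linarith),
          ← Complex.ofReal_mul, abs_of_pos htp]
        congr 3
        ring_nf
      · rw [Set.indicator_of_notMem, Set.indicator_of_notMem]
        · exact hv
        · intro h
          have h : 0 < t * v := h
          push Not at hv
          nlinarith
    simp only [e]
    rw [integral_indicator measurableSet_Ioi, integral_const_mul, norm_mul, hn]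
    calc _ ≤ lam ^ (-c) * (|r| ^ (-(k * c)) * |t| ^ (-c)) * Q := by gcongr; exact hK1 t r
      _ = _ := by ring

lemma aux_Xz {a : ℝ × ℝ × ℝ → ℂ} (ha : Continuous a) (hca : HasCompactSupport a)
    {k : ℕ} {lam c : ℝ} (hlam : 0 < lam) (hc1 : c < 1) (hkc : k * c < 1) {z : ℂ} (hz : z.re = c) :
    Integrable (fun x : ℝ × ℝ × ℝ => ((lam * x.2.1 * x.2.2 * x.1 ^ k : ℝ) : ℂ) ^ (-z) *
      a (x.2.1, x.1, x.2.2)) ((volume.restrict (Set.Ioi (0:ℝ))).prod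
      ((volume : Measure (ℝ × ℝ)).restrict {p : ℝ × ℝ | 0 < p.1 * p.2})) := by
  refine Integrable.mono' (aux_XA ha hca hlam hc1 hkc) ?_ ?_
  · apply AEStronglyMeasurable.mul
    · apply Measurable.aestronglyMeasurable
      apply Measurable.pow <;> fun_prop
    · exact Continuous.aestronglyMeasurable (by fun_prop)
  · filter_upwards [aux_mem_ae] with x hx
    have h1 := hx.1
    have h2 := hx.2
    have : 0 < lam * x.2.1 * x.2.2 * x.1 ^ k := by
      rw [mul_assoc lam]; positivity
    rw [norm_mul, Complex.norm_cpow_eq_rpow_re_of_pos this, Complex.neg_re, hz]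

lemma aux_N {a : ℝ × ℝ × ℝ → ℂ} (ha : ContDiff ℝ (⊤ : ℕ∞) a) (hca : HasCompactSupport a)
    {k : ℕ} {lam c : ℝ} (hlam : 0 < lam) (hc0 : 0 < c) (hc1 : c < 1) (hkc : k * c < 1) :
    ∃ C : ℝ, ∀ s : ℝ, ‖∫ x : ℝ × ℝ × ℝ, ((lam * x.2.1 * x.2.2 * x.1 ^ k : ℝ) : ℂ) ^
        (-((c:ℂ) + s * Complex.I)) *
      a (x.2.1, x.1, x.2.2) ∂((volume.restrict (Set.Ioi (0:ℝ))).prod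
      ((volume : Measure (ℝ × ℝ)).restrict {p : ℝ × ℝ | 0 < p.1 * p.2}))‖ ≤
      C * (1 + ‖s‖) ^ (-2 : ℝ) := by
  obtain ⟨R, hR⟩ := hca.isCompact.isBounded.subset_closedBall 0
  obtain ⟨K1, hK10, hK1⟩ := aux_v ha hca hc0 hc1
  have hfl : ContDiff ℝ (⊤ : ℕ∞) (fun x : ℝ × ℝ × ℝ => a (x.1, x.2.1, -x.2.2)) :=
    ha.comp (by fun_prop)
  have hflc : HasCompactSupport (fun x : ℝ × ℝ × ℝ => a (x.1, x.2.1, -x.2.2)) := by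
    refine HasCompactSupport.intro (isCompact_closedBall (0 : ℝ × ℝ × ℝ) R) fun x hx => ?_
    by_contra h
    apply hx
    have := hR (subset_tsupport _ h)
    simpa [Prod.norm_def] using this
  obtain ⟨K2, hK20, hK2⟩ := aux_v hfl hflc hc0 hc1
  set I1 := ∫ r in Set.Ioi (0:ℝ), Set.indicator (Set.Icc (-R) R) (fun t : ℝ => |t| ^ (-(k * c))) r
  set I2 := ∫ t : ℝ, Set.indicator (Set.Icc (-R) R) (fun t : ℝ => |t| ^ (-c)) t
  have hnn : ∀ (e' y : ℝ), 0 ≤ Set.indicator (Set.Icc (-R) R) (fun t : ℝ => |t| ^ (-e')) y :=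
    fun e' y => Set.indicator_nonneg (fun v hv => Real.rpow_nonneg (abs_nonneg _) _) y
  have hI1 : 0 ≤ I1 := integral_nonneg fun r => hnn _ r
  have hI2 : 0 ≤ I2 := integral_nonneg fun r => hnn _ r
  refine ⟨lam ^ (-c) * (K1 + K2) * (I1 * I2) * (4 / (1 - c) ^ 2), fun s => ?_⟩
  set z : ℂ := (c:ℂ) + s * Complex.I with hzdef
  have hz : z.re = c := by simp [hzdef]
  have hzi : z.im = s := by simp [hzdef]
  set Q := (K1 + K2) / (‖1 - z‖ * ‖2 - z‖) with hQ
  have hQ1 : ∀ t r : ℝ, ‖∫ v in Set.Ioi (0:ℝ), (v : ℂ) ^ (-z) * a (t, r, v)‖ ≤ Q := fun t r =>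
    (hK1 z hz t r).trans (by rw [hQ]; gcongr; linarith)
  have hQ2 : ∀ t r : ℝ, ‖∫ v in Set.Ioi (0:ℝ), (v : ℂ) ^ (-z) * a (t, r, -v)‖ ≤ Q := fun t r =>
    (hK2 z hz t r).trans (by rw [hQ]; gcongr; linarith)
  have hint := aux_Xz (k := k) ha.continuous hca hlam hc1 hkc hz
  have hmain : ‖∫ x : ℝ × ℝ × ℝ, ((lam * x.2.1 * x.2.2 * x.1 ^ k : ℝ) : ℂ) ^ (-z) *
      a (x.2.1, x.1, x.2.2) ∂((volume.restrict (Set.Ioi (0:ℝ))).prod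
      ((volume : Measure (ℝ × ℝ)).restrict {p : ℝ × ℝ | 0 < p.1 * p.2}))‖ ≤
      lam ^ (-c) * Q * (I1 * I2) := by
    rw [integral_prod _ hint]
    have e : lam ^ (-c) * Q * (I1 * I2) = ∫ r in Set.Ioi (0:ℝ), (lam ^ (-c) * Q * I2) *
        Set.indicator (Set.Icc (-R) R) (fun t : ℝ => |t| ^ (-(k * c))) r := by
      rw [integral_const_mul]; ring
    rw [e]
    refine norm_integral_le_of_norm_le ((aux_h hkc).integrableOn.const_mul _) ?_
    filter_upwards [hint.prod_right_ae, ae_restrict_mem measurableSet_Ioi] with r hri hr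
    have hr : 0 < r := hr
    beta_reduce at hri ⊢
    replace hri := (integrable_indicator_iff aux_S).2 hri
    rw [← integral_indicator aux_S, Measure.volume_eq_prod, integral_prod _ hri]
    have e : lam ^ (-c) * Q * I2 * Set.indicator (Set.Icc (-R) R) (fun t : ℝ => |t| ^ (-(k * c))) r
        = ∫ t : ℝ, lam ^ (-c) * Q * (Set.indicator (Set.Icc (-R) R) (fun t : ℝ => |t| ^ (-(k * c))) r *
      Set.indicator (Set.Icc (-R) R) (fun t : ℝ => |t| ^ (-c)) t) := by
      rw [integral_const_mul, integral_const_mul]; ring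
    rw [e]
    refine norm_integral_le_of_norm_le (((aux_h hc1).const_mul _).const_mul _) ?_
    have hne : ∀ᵐ t : ℝ, t ≠ 0 := by
      have := measure_singleton (μ := (volume : Measure ℝ)) 0
      exact compl_mem_ae_iff.2 this
    filter_upwards [hne] with t ht
    exact aux_inner (K := 0) k hlam hz hR hQ1 hQ2 ht hr
  refine hmain.trans ?_
  have hb : ∀ m : ℝ, 1 ≤ m → (1 - c) * (1 + ‖s‖) / 2 ≤ ‖(m : ℂ) - z‖ := by
    intro m hm
    have h1 := Complex.abs_re_le_norm ((m : ℂ) - z)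
    have h2 := Complex.abs_im_le_norm ((m : ℂ) - z)
    simp only [Complex.sub_re, Complex.ofReal_re, hz, Complex.sub_im, Complex.ofReal_im, hzi,
      zero_sub, abs_neg] at h1 h2
    have h3 := (le_abs_self _).trans h1
    rw [Real.norm_eq_abs]
    nlinarith [abs_nonneg s]
  have b1 := hb 1 le_rfl
  have b2 := hb 2 (by norm_num)
  simp only [Complex.ofReal_one, Complex.ofReal_ofNat] at b1 b2
  have hpos : 0 < (1 - c) * (1 + ‖s‖) / 2 := by
    have : 0 < 1 - c := by linarith
    positivity
  have hQle : Q ≤ (K1 + K2) * (4 / (1 - c) ^ 2 * (1 + ‖s‖) ^ (-2 : ℝ)) := by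
    calc Q ≤ (K1 + K2) / (((1 - c) * (1 + ‖s‖) / 2) * ((1 - c) * (1 + ‖s‖) / 2)) := by
          rw [hQ]; gcongr
      _ = _ := by
          have : 1 - c ≠ 0 := by linarith
          have h5 : (1 + ‖s‖) ≠ 0 := by positivity
          rw [Real.rpow_neg (by positivity), Real.rpow_two]
          field_simp
          ring
  calc lam ^ (-c) * Q * (I1 * I2) ≤ lam ^ (-c) * ((K1 + K2) * (4 / (1 - c) ^ 2 * (1 + ‖s‖) ^ (-2 : ℝ))) * (I1 * I2) := by gcongr
    _ = _ := by ring

/-- the Mellin–Barnes representation of the oscillatory integral: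
for `a` smooth compactly supported, `λ > 0` and `0 < c < 1/k`,
`∫₀^∞ ∫_{tv>0} e^{iλ t v rᵏ} a(t,r,v) dt dv dr
  = (1/2π) ∫_ℝ e^{iπ(c+is)/2} Γ(c+is) λ^{−(c+is)} M(c+is) ds`,
with `M(z) = ∫₀^∞ ∫_{tv>0} (t v rᵏ)^{−z} a(t,r,v) dt dv dr`, the `s`-integral on
the right converging absolutely. -/
theorem stmt_11 (k : ℕ) (hk : 1 ≤ k)
    (a : ℝ × ℝ × ℝ → ℂ) (ha : ContDiff ℝ (⊤ : ℕ∞) a) (hca : HasCompactSupport a)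
    (lam c : ℝ) (hlam : 0 < lam) (hc0 : 0 < c) (hc1 : c < 1 / (k : ℝ))
    (M : ℂ → ℂ)
    (hM : ∀ z : ℂ, 0 < z.re → z.re < 1 / (k : ℝ) →
      M z = ∫ r in Set.Ioi (0:ℝ), ∫ p in {p : ℝ × ℝ | 0 < p.1 * p.2},
        (((p.1 * p.2 * r ^ k : ℝ)) : ℂ) ^ (-z) * a (p.1, r, p.2)) :
    Integrable (fun s : ℝ =>
      Complex.exp (Complex.I * Real.pi * ((c : ℂ) + (s : ℂ) * Complex.I) / 2) *
        Complex.Gamma ((c : ℂ) + (s : ℂ) * Complex.I) *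
        ((lam : ℂ) ^ (-((c : ℂ) + (s : ℂ) * Complex.I))) *
        M ((c : ℂ) + (s : ℂ) * Complex.I)) ∧
    (∫ r in Set.Ioi (0:ℝ), ∫ p in {p : ℝ × ℝ | 0 < p.1 * p.2},
        Complex.exp (Complex.I * ((lam * p.1 * p.2 * r ^ k : ℝ) : ℂ)) * a (p.1, r, p.2))
      = (1 / (2 * (Real.pi : ℂ))) *
          ∫ s : ℝ,
            Complex.exp (Complex.I * Real.pi * ((c : ℂ) + (s : ℂ) * Complex.I) / 2) *
              Complex.Gamma ((c : ℂ) + (s : ℂ) * Complex.I) *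
              ((lam : ℂ) ^ (-((c : ℂ) + (s : ℂ) * Complex.I))) *
              M ((c : ℂ) + (s : ℂ) * Complex.I) := by
  have hkpos : (0:ℝ) < k := by exact_mod_cast hk
  have hk1 : (1:ℝ) ≤ k := by exact_mod_cast hk
  have hkc : k * c < 1 := by
    rw [lt_div_iff₀ hkpos] at hc1
    linarith
  have hclt : c < 1 := by nlinarith
  set μ := ((volume.restrict (Set.Ioi (0:ℝ))).prod
      ((volume : Measure (ℝ × ℝ)).restrict {p : ℝ × ℝ | 0 < p.1 * p.2})) with hμ
  obtain ⟨C, hC⟩ := aux_N (k := k) ha hca hlam hc0 hclt hkc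
  have hre : ∀ s : ℝ, ((c : ℂ) + s * Complex.I).re = c := fun s => by simp
  have hA : Integrable (fun x : ℝ × ℝ × ℝ => a (x.2.1, x.1, x.2.2)) μ := by
    have := aux_XA (k := k) (e := 0) ha.continuous hca hlam (by norm_num) (by norm_num)
    simp only [neg_zero, Real.rpow_zero, one_mul] at this
    have hc := ha.continuous
    exact (integrable_norm_iff (Continuous.aestronglyMeasurable (by fun_prop))).1 this
  have hN : ∀ s : ℝ, (lam : ℂ) ^ (-((c : ℂ) + (s : ℂ) * Complex.I)) *
      M ((c : ℂ) + (s : ℂ) * Complex.I) = ∫ x : ℝ × ℝ × ℝ,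
      ((lam * x.2.1 * x.2.2 * x.1 ^ k : ℝ) : ℂ) ^ (-((c:ℂ) + s * Complex.I)) *
      a (x.2.1, x.1, x.2.2) ∂μ := by
    intro s
    rw [hμ, integral_prod _ (aux_Xz ha.continuous hca hlam hclt hkc (hre s)),
      hM _ (by rw [hre]; exact hc0) (by rw [hre]; exact hc1), ← integral_const_mul]
    refine setIntegral_congr_fun measurableSet_Ioi fun r hr => ?_
    have hr : 0 < r := hr
    beta_reduce
    rw [← integral_const_mul]
    refine setIntegral_congr_fun aux_S fun p hp => ?_
    have hp : 0 < p.1 * p.2 := hp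
    beta_reduce
    rw [← mul_assoc, ← Complex.mul_cpow_ofReal_nonneg hlam.le (by positivity),
      ← Complex.ofReal_mul]
    congr 3
    ring_nf
  have key := aux_abs μ (fun x : ℝ × ℝ × ℝ => lam * x.2.1 * x.2.2 * x.1 ^ k) (by fun_prop) ?_
    (fun x => a (x.2.1, x.1, x.2.2)) hA hc0 hclt (aux_XA ha.continuous hca hlam hclt hkc) C
    (fun s => (lam : ℂ) ^ (-((c : ℂ) + (s : ℂ) * Complex.I)) *
      M ((c : ℂ) + (s : ℂ) * Complex.I)) hN (fun s => by rw [hN]; exact hC s)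
  · have e : ∀ s : ℝ, Complex.exp (((Real.pi / 2 : ℝ) : ℂ) * Complex.I * (c + s * Complex.I)) *
        Complex.Gamma (c + s * Complex.I) * ((lam : ℂ) ^ (-((c : ℂ) + (s : ℂ) * Complex.I)) *
      M ((c : ℂ) + (s : ℂ) * Complex.I)) =
      Complex.exp (Complex.I * Real.pi * ((c : ℂ) + (s : ℂ) * Complex.I) / 2) *
        Complex.Gamma ((c : ℂ) + (s : ℂ) * Complex.I) *
        ((lam : ℂ) ^ (-((c : ℂ) + (s : ℂ) * Complex.I))) *
        M ((c : ℂ) + (s : ℂ) * Complex.I) := by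
      intro s
      rw [← mul_assoc]
      congr 4
      push_cast
      ring
    simp only [e] at key
    refine ⟨key.1, ?_⟩
    rw [← key.2, hμ, integral_prod]
    rw [← hμ]
    refine hA.bdd_mul (c := 1) (Continuous.aestronglyMeasurable (by fun_prop)) (Filter.Eventually.of_forall fun x => ?_)
    rw [mul_comm, Complex.norm_exp_ofReal_mul_I]
  · filter_upwards [aux_mem_ae] with x hx
    have h1 := hx.1
    have h2 := hx.2
    rw [mul_assoc lam]
    positivity
end
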